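/- Multiple Khintchine inequality: let 0 < r < ∞ and m ∈ ℕ, m ≥ 1. For every N ∈ ℕ and every array of real scalars (y_{i₁…i_m})_{i₁,…,i_m=1}^{N} one has (∑_{i₁,…,i_m=1}^{N} |y_{i₁…i_m}|²)^{1/2} ≤ (A_r)^m · (∫_{[0,1]^m} |∑_{i₁,…,i_m=1}^{N} r_{i₁}(t₁)···r_{i_m}(t_m) y_{i₁…i_m}|^{r} dt₁···dt_m)^{1/r}. -/

import Mathlib

open MeasureTheory Real Filter

/-- The `j`-th Rademacher function, `r_j(t) = sgn(sin(2^j π t))`. -/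
noncomputable def rademacher (j : ℕ) (t : ℝ) : ℝ :=
  Real.sign (Real.sin ((2 : ℝ) ^ j * Real.pi * t))

/-- `p₀ ∈ (1,2)` is the unique solution of `Γ((p₀+1)/2) = √π / 2`. -/
noncomputable def khintchineP0 : ℝ :=
  sInf {p : ℝ | 1 < p ∧ p < 2 ∧ Real.Gamma ((p + 1) / 2) = Real.sqrt Real.pi / 2}

/-- The optimal constant `A_r` in the Khintchine inequality. -/
noncomputable def khintchineA (r : ℝ) : ℝ :=
  if r ≤ khintchineP0 then (2 : ℝ) ^ (1 / r - 1 / 2)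
  else if r < 2 then
    (1 / Real.sqrt 2) * (Real.Gamma ((r + 1) / 2) / Real.sqrt Real.pi) ^ (-(1 / r))
  else 1

/-- The `ℓ_p` norm of a vector in `ℝⁿ` (for finite `p`). -/
noncomputable def lpNorm (p : ℝ) {n : ℕ} (x : Fin n → ℝ) : ℝ :=
  (∑ i, |x i| ^ p) ^ (1 / p)

/-- The `ℓ_∞` norm of a vector in `ℝⁿ`. -/
noncomputable def linfNorm {n : ℕ} (x : Fin n → ℝ) : ℝ :=
  ⨆ i, |x i|

/-!
Let `1 < p < 2`. Since `|x| ^ p` is a positive multiple of `∫ (1 - cos (u x)) u ^ (-p - 1) du`, the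
average of `|∑ ± aᵢ| ^ p` over all signs is the same multiple of
`∫ (1 - ∏ cos (u aᵢ)) u ^ (-p - 1) du`. If all `aᵢ ^ 2` are at most half of `∑ aᵢ ^ 2`, the
inequality of arithmetic and geometric means reduces the bound by the Gaussian moment to
`∫ (1 - |cos x| ^ s) ≥ ∫ (1 - exp (-s x ^ 2 / 2))` for `s ≥ 2`. By an argument of Nazarov and
Podkorytov it suffices to treat `s = 2`, because the distribution functions of the two integrands
(at `s = 1`) cross only once. A dominating coefficient is handled by induction on the number of
coefficients, for a stronger statement in which the graph of `(1 + x) ^ (p / 2)` is reflected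
through its point at `x = 1`; merging two coefficients `a`, `b` into `a + b` and `a - b` reduces it
to a two-point inequality, which holds as long as the Gaussian moment is at most `2 ^ (p / 2 - 1)`,
that is, for `p ≥ p₀`.

This gives the Gaussian constant for `p₀ < r < 2` and the constant at `p₀` itself; for `r < p₀` one
interpolates the `p₀`-th moment between the `r`-th moment and the second moment. In several
variables the case `r ≤ 2` follows by integrating one variable at a time, with Minkowski's
inequality in `L ^ (2 / r)`, and the case `r ≥ 2` from `r = 2` by Jensen's inequality.
-/

/-! ### Taylor bounds for trigonometric functions -/

theorem le_of_hasDerivAt_le {f f' g g' : ℝ → ℝ} {a b : ℝ} (hab : a ≤ b) (ha : f a ≤ g a)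
    (hf : ∀ x ∈ Set.Icc a b, HasDerivAt f (f' x) x)
    (hg : ∀ x ∈ Set.Icc a b, HasDerivAt g (g' x) x)
    (hle : ∀ x ∈ Set.Icc a b, f' x ≤ g' x) : f b ≤ g b :=
  image_le_of_deriv_right_le_deriv_boundary (f' := f') (B' := g')
    (fun x hx => (hf x hx).continuousAt.continuousWithinAt)
    (fun x hx => (hf x (Set.Ico_subset_Icc_self hx)).hasDerivWithinAt) ha
    (fun x hx => (hg x hx).continuousAt.continuousWithinAt)
    (fun x hx => (hg x (Set.Ico_subset_Icc_self hx)).hasDerivWithinAt)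
    (fun x hx => hle x (Set.Ico_subset_Icc_self hx)) (Set.right_mem_Icc.2 hab)

theorem cos_le_taylor_four {x : ℝ} (hx : 0 ≤ x) : cos x ≤ 1 - x ^ 2 / 2 + x ^ 4 / 24 := by
  refine le_of_hasDerivAt_le (f := cos) (g := fun x => 1 - x ^ 2 / 2 + x ^ 4 / 24)
    (g' := fun x => -(x - x ^ 3 / 6)) hx (by simp) (fun y _ => hasDerivAt_cos y)
    (fun y _ => ?_) (fun y hy => neg_le_neg (sin_ge_sub_cube hy.1))
  refine HasDerivAt.congr_deriv (((hasDerivAt_pow 2 y).div_const 2).const_sub 1 |>.add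
    ((hasDerivAt_pow 4 y).div_const 24)) ?_
  push_cast; ring

theorem sin_le_taylor_five {x : ℝ} (hx : 0 ≤ x) : sin x ≤ x - x ^ 3 / 6 + x ^ 5 / 120 := by
  refine le_of_hasDerivAt_le (f := sin) (g := fun x => x - x ^ 3 / 6 + x ^ 5 / 120)
    (g' := fun x => 1 - x ^ 2 / 2 + x ^ 4 / 24) hx (by simp) (fun y _ => hasDerivAt_sin y)
    (fun y _ => ?_) (fun y hy => cos_le_taylor_four hy.1)
  refine HasDerivAt.congr_deriv ((hasDerivAt_id' y).sub ((hasDerivAt_pow 3 y).div_const 6) |>.add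
    ((hasDerivAt_pow 5 y).div_const 120)) ?_
  push_cast; ring

theorem taylor_six_le_cos {x : ℝ} (hx : 0 ≤ x) :
    1 - x ^ 2 / 2 + x ^ 4 / 24 - x ^ 6 / 720 ≤ cos x := by
  refine le_of_hasDerivAt_le (f := fun x => 1 - x ^ 2 / 2 + x ^ 4 / 24 - x ^ 6 / 720) (g := cos)
    (f' := fun x => -(x - x ^ 3 / 6 + x ^ 5 / 120)) hx (by simp) (fun y _ => ?_)
    (fun y _ => hasDerivAt_cos y) (fun y hy => neg_le_neg (sin_le_taylor_five hy.1))
  refine HasDerivAt.congr_deriv (((hasDerivAt_pow 2 y).div_const 2).const_sub 1 |>.add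
    ((hasDerivAt_pow 4 y).div_const 24) |>.sub ((hasDerivAt_pow 6 y).div_const 720)) ?_
  push_cast; ring

theorem cos_pos_of_nonneg_of_lt_pi_div_two {x : ℝ} (h0 : 0 ≤ x) (h1 : x < π / 2) : 0 < cos x :=
  cos_pos_of_mem_Ioo ⟨by linarith [pi_pos], h1⟩

/- Since `tan' = 1 + tan ^ 2`, iterating this bootstraps polynomial lower bounds for `tan`. -/
theorem le_tan_of_deriv_le_one_add_sq {P P' Q : ℝ → ℝ} {x : ℝ} (hx : 0 ≤ x) (hx' : x < π / 2)
    (hP0 : P 0 = 0) (hP : ∀ y, HasDerivAt P (P' y) y) (hQ : ∀ y ∈ Set.Icc 0 x, 0 ≤ Q y)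
    (hQtan : ∀ y ∈ Set.Icc 0 x, Q y ≤ tan y) (hPQ : ∀ y ∈ Set.Icc 0 x, P' y ≤ 1 + Q y ^ 2) :
    P x ≤ tan x := by
  have hcos : ∀ y ∈ Set.Icc 0 x, cos y ≠ 0 := fun y hy =>
    (cos_pos_of_nonneg_of_lt_pi_div_two hy.1 (hy.2.trans_lt hx')).ne'
  refine le_of_hasDerivAt_le (f := P) (f' := P') (g := tan) (g' := fun y => 1 + tan y ^ 2) hx
    (by simp [hP0]) (fun y _ => hP y) (fun y hy => ?_) (fun y hy => ?_)
  · refine (hasDerivAt_tan (hcos y hy)).congr_deriv ?_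
    rw [one_div, ← inv_one_add_tan_sq (hcos y hy), inv_inv]
  · exact (hPQ y hy).trans (by gcongr; exacts [hQ y hy, hQtan y hy])

theorem taylor_three_le_tan {x : ℝ} (hx : 0 ≤ x) (hx' : x < π / 2) : x + x ^ 3 / 3 ≤ tan x := by
  refine le_tan_of_deriv_le_one_add_sq (P := fun x => x + x ^ 3 / 3) (P' := fun x => 1 + x ^ 2)
    (Q := id) hx hx' (by simp) (fun y => ?_) (fun y hy => hy.1)
    (fun y hy => le_tan hy.1 (hy.2.trans_lt hx')) (fun y _ => le_rfl)
  refine HasDerivAt.congr_deriv ((hasDerivAt_id' y).add ((hasDerivAt_pow 3 y).div_const 3)) ?_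
  push_cast; ring

theorem taylor_five_le_tan {x : ℝ} (hx : 0 ≤ x) (hx' : x < π / 2) :
    x + x ^ 3 / 3 + 2 * x ^ 5 / 15 ≤ tan x := by
  refine le_tan_of_deriv_le_one_add_sq (P := fun x => x + x ^ 3 / 3 + 2 * x ^ 5 / 15)
    (P' := fun x => 1 + x ^ 2 + 2 * x ^ 4 / 3) hx hx' (by simp) (fun y => ?_)
    (fun y hy => ?_) (fun y hy => taylor_three_le_tan hy.1 (hy.2.trans_lt hx')) (fun y hy => ?_)
  · refine HasDerivAt.congr_deriv ((hasDerivAt_id' y).add ((hasDerivAt_pow 3 y).div_const 3)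
      |>.add (((hasDerivAt_pow 5 y).const_mul 2).div_const 15)) ?_
    push_cast; ring
  · have := hy.1; positivity
  · nlinarith [pow_nonneg hy.1 6]

theorem taylor_seven_le_tan {x : ℝ} (hx : 0 ≤ x) (hx' : x < π / 2) :
    x + x ^ 3 / 3 + 2 * x ^ 5 / 15 + 17 * x ^ 7 / 315 ≤ tan x := by
  refine le_tan_of_deriv_le_one_add_sq
    (P := fun x => x + x ^ 3 / 3 + 2 * x ^ 5 / 15 + 17 * x ^ 7 / 315)
    (P' := fun x => 1 + x ^ 2 + 2 * x ^ 4 / 3 + 17 * x ^ 6 / 45) hx hx' (by simp) (fun y => ?_)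
    (fun y hy => ?_) (fun y hy => taylor_five_le_tan hy.1 (hy.2.trans_lt hx')) (fun y hy => ?_)
  · refine HasDerivAt.congr_deriv ((hasDerivAt_id' y).add ((hasDerivAt_pow 3 y).div_const 3)
      |>.add (((hasDerivAt_pow 5 y).const_mul 2).div_const 15)
      |>.add (((hasDerivAt_pow 7 y).const_mul 17).div_const 315)) ?_
    push_cast; ring
  · have := hy.1; positivity
  · nlinarith [pow_nonneg hy.1 8, pow_nonneg hy.1 10]

theorem taylor_nine_le_tan {x : ℝ} (hx : 0 ≤ x) (hx' : x < π / 2) :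
    x + x ^ 3 / 3 + 2 * x ^ 5 / 15 + 17 * x ^ 7 / 315 + 62 * x ^ 9 / 2835 ≤ tan x := by
  refine le_tan_of_deriv_le_one_add_sq
    (P := fun x => x + x ^ 3 / 3 + 2 * x ^ 5 / 15 + 17 * x ^ 7 / 315 + 62 * x ^ 9 / 2835)
    (P' := fun x => 1 + x ^ 2 + 2 * x ^ 4 / 3 + 17 * x ^ 6 / 45 + 62 * x ^ 8 / 315) hx hx'
    (by simp) (fun y => ?_) (fun y hy => ?_)
    (fun y hy => taylor_seven_le_tan hy.1 (hy.2.trans_lt hx')) (fun y hy => ?_)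
  · refine HasDerivAt.congr_deriv ((hasDerivAt_id' y).add ((hasDerivAt_pow 3 y).div_const 3)
      |>.add (((hasDerivAt_pow 5 y).const_mul 2).div_const 15)
      |>.add (((hasDerivAt_pow 7 y).const_mul 17).div_const 315)
      |>.add (((hasDerivAt_pow 9 y).const_mul 62).div_const 2835)) ?_
    push_cast; ring
  · have := hy.1; positivity
  · nlinarith [pow_nonneg hy.1 10, pow_nonneg hy.1 12, pow_nonneg hy.1 14]

theorem taylor_eleven_le_tan {x : ℝ} (hx : 0 ≤ x) (hx' : x < π / 2) :
    x + x ^ 3 / 3 + 2 * x ^ 5 / 15 + 17 * x ^ 7 / 315 + 62 * x ^ 9 / 2835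
      + 1382 * x ^ 11 / 155925 ≤ tan x := by
  refine le_tan_of_deriv_le_one_add_sq
    (P := fun x => x + x ^ 3 / 3 + 2 * x ^ 5 / 15 + 17 * x ^ 7 / 315 + 62 * x ^ 9 / 2835
      + 1382 * x ^ 11 / 155925)
    (P' := fun x => 1 + x ^ 2 + 2 * x ^ 4 / 3 + 17 * x ^ 6 / 45 + 62 * x ^ 8 / 315
      + 1382 * x ^ 10 / 14175) hx hx' (by simp) (fun y => ?_) (fun y hy => ?_)
    (fun y hy => taylor_nine_le_tan hy.1 (hy.2.trans_lt hx')) (fun y hy => ?_)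
  · refine HasDerivAt.congr_deriv ((hasDerivAt_id' y).add ((hasDerivAt_pow 3 y).div_const 3)
      |>.add (((hasDerivAt_pow 5 y).const_mul 2).div_const 15)
      |>.add (((hasDerivAt_pow 7 y).const_mul 17).div_const 315)
      |>.add (((hasDerivAt_pow 9 y).const_mul 62).div_const 2835)
      |>.add (((hasDerivAt_pow 11 y).const_mul 1382).div_const 155925)) ?_
    push_cast; ring
  · have := hy.1; positivity
  · nlinarith [pow_nonneg hy.1 12, pow_nonneg hy.1 14, pow_nonneg hy.1 16, pow_nonneg hy.1 18]

theorem tan_mul_pi_div_two_sub_le_one {x : ℝ} (hx : 0 < x) (hx' : x < π / 2) :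
    tan x * (π / 2 - x) ≤ 1 := by
  have htan : 0 < tan x := tan_pos_of_pos_of_lt_pi_div_two hx hx'
  calc tan x * (π / 2 - x) ≤ tan x * tan (π / 2 - x) := by
        gcongr; exact le_tan (by linarith) (by linarith)
    _ = 1 := by rw [tan_pi_div_two_sub, mul_inv_cancel₀ htan.ne']

/-- The function `-log (cos x ^ 2)` on `[0, π / 2)`. In these terms
`cos x < exp (-t ^ 2 / 2)` reads `t ^ 2 < negLogCosSq x`. -/
noncomputable def negLogCosSq (x : ℝ) : ℝ := -2 * log (cos x)

theorem hasDerivAt_negLogCosSq {x : ℝ} (h0 : 0 ≤ x) (h1 : x < π / 2) :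
    HasDerivAt negLogCosSq (2 * tan x) x := by
  have hc := cos_pos_of_nonneg_of_lt_pi_div_two h0 h1
  refine HasDerivAt.congr_deriv (((hasDerivAt_cos x).log hc.ne').const_mul (-2)) ?_
  rw [tan_eq_sin_div_cos]; ring

theorem taylor_twelve_le_negLogCosSq {x : ℝ} (hx : 0 ≤ x) (hx' : x < π / 2) :
    x ^ 2 + x ^ 4 / 6 + 2 * x ^ 6 / 45 + 17 * x ^ 8 / 1260 + 62 * x ^ 10 / 14175
      + 1382 * x ^ 12 / 935550 ≤ negLogCosSq x := by
  refine le_of_hasDerivAt_le (g := negLogCosSq) (g' := fun x => 2 * tan x)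
    (f := fun x => x ^ 2 + x ^ 4 / 6 + 2 * x ^ 6 / 45 + 17 * x ^ 8 / 1260 + 62 * x ^ 10 / 14175
      + 1382 * x ^ 12 / 935550)
    (f' := fun x => 2 * (x + x ^ 3 / 3 + 2 * x ^ 5 / 15 + 17 * x ^ 7 / 315
      + 62 * x ^ 9 / 2835 + 1382 * x ^ 11 / 155925)) hx (by simp [negLogCosSq])
    (fun y _ => ?_) (fun y hy => hasDerivAt_negLogCosSq hy.1 (hy.2.trans_lt hx'))
    (fun y hy => by gcongr; exact taylor_eleven_le_tan hy.1 (hy.2.trans_lt hx'))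
  refine HasDerivAt.congr_deriv ((hasDerivAt_pow 2 y).add
    ((hasDerivAt_pow 4 y).div_const 6)
    |>.add (((hasDerivAt_pow 6 y).const_mul 2).div_const 45)
    |>.add (((hasDerivAt_pow 8 y).const_mul 17).div_const 1260)
    |>.add (((hasDerivAt_pow 10 y).const_mul 62).div_const 14175)
    |>.add (((hasDerivAt_pow 12 y).const_mul 1382).div_const 935550)) ?_
  push_cast; ring

theorem sq_le_negLogCosSq {x : ℝ} (hx : 0 ≤ x) (hx' : x < π / 2) : x ^ 2 ≤ negLogCosSq x := by
  refine le_trans ?_ (taylor_twelve_le_negLogCosSq hx hx')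
  have : 0 ≤ x ^ 4 / 6 + 2 * x ^ 6 / 45 + 17 * x ^ 8 / 1260 + 62 * x ^ 10 / 14175
      + 1382 * x ^ 12 / 935550 := by positivity
  linarith

theorem negLogCosSq_pos {x : ℝ} (hx : 0 < x) (hx' : x < π / 2) : 0 < negLogCosSq x :=
  (pow_pos hx 2).trans_le (sq_le_negLogCosSq hx.le hx')

theorem six_fifths_lt_pi_div_two : (6 / 5 : ℝ) < π / 2 := by linarith [pi_gt_three]

theorem cos_six_fifths_le : cos (6 / 5) ≤ exp (-1) := by
  calc cos (6 / 5) ≤ 1 - (6 / 5) ^ 2 / 2 + (6 / 5) ^ 4 / 24 := cos_le_taylor_four (by norm_num)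
    _ ≤ 1 / 2.7182818286 := by norm_num
    _ ≤ 1 / exp 1 := one_div_le_one_div_of_le (exp_pos 1) exp_one_lt_d9.le
    _ = exp (-1) := by rw [exp_neg, one_div]

theorem two_le_negLogCosSq {x : ℝ} (hx : 6 / 5 ≤ x) (hx' : x < π / 2) : 2 ≤ negLogCosSq x := by
  have hcos : cos x ≤ exp (-1) :=
    (cos_le_cos_of_nonneg_of_le_pi (by norm_num) (by linarith) hx).trans cos_six_fifths_le
  have hlog : log (cos x) ≤ -1 :=
    (log_le_iff_le_exp (cos_pos_of_nonneg_of_lt_pi_div_two (by linarith) hx')).2 hcos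
  rw [negLogCosSq]; linarith

theorem negLogCosSq_six_fifths_le : negLogCosSq (6 / 5) ≤ 207 / 100 := by
  have hexp : (2.7 * 1.035 : ℝ) ≤ exp 1.035 := by
    calc (2.7 * 1.035 : ℝ) ≤ exp 1 * exp 0.035 :=
          mul_le_mul (by linarith [exp_one_gt_d9]) (by linarith [add_one_le_exp (0.035 : ℝ)])
            (by norm_num) (exp_pos 1).le
      _ = exp 1.035 := by rw [← exp_add]; norm_num
  have hcos : exp (-1.035) ≤ cos (6 / 5) := by
    calc exp (-1.035) ≤ (2.7 * 1.035)⁻¹ := by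
          rw [exp_neg]; exact inv_anti₀ (by norm_num) hexp
      _ ≤ _ := by norm_num
      _ ≤ cos (6 / 5) := taylor_six_le_cos (by norm_num)
  have hlog := (le_log_iff_exp_le ((exp_pos _).trans_le hcos)).2 hcos
  rw [negLogCosSq]; linarith

/-! ### Antitonicity of the Gaussian excess near the origin -/

theorem sin_taylor_mul_le_cos_taylor_mul {z X : ℝ} (hz : 0 ≤ z) (hz' : z ≤ 144 / 100)
    (hX : X = 1 + z / 6 + 2 * z ^ 2 / 45 + 17 * z ^ 3 / 1260 + 62 * z ^ 4 / 14175
      + 1382 * z ^ 5 / 935550) :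
    (1 - z / 6 + z ^ 2 / 120) * (9 + X) ≤
      (1 - z / 2 + z ^ 2 / 24 - z ^ 3 / 720) * (15 * X ^ 2 - 5 * X) := by
  have h (k : ℕ) : 0 ≤ z * ((144 / 100) ^ k - z ^ k) :=
    mul_nonneg hz (sub_nonneg.2 (pow_le_pow_left₀ hz hz' k))
  subst hX
  linarith [h 1, h 2, h 3, h 4, h 5, h 6, h 7, h 8, h 9, h 10, h 12, pow_nonneg hz 12]

theorem mul_nine_add_le_mul_of_le {s S c C X Y : ℝ} (hsS : s ≤ S) (hS : S ≤ 1) (hCc : C ≤ c)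
    (hC : 3 / 10 ≤ C) (hX : 1 ≤ X) (hXY : X ≤ Y) (h : S * (9 + X) ≤ C * (15 * X ^ 2 - 5 * X)) :
    s * (9 + Y) ≤ c * (15 * Y ^ 2 - 5 * Y) := by
  have hincr : 0 ≤ (Y - X) * (C * (15 * (Y + X) - 5) - S) :=
    mul_nonneg (by linarith) (by nlinarith)
  calc s * (9 + Y) ≤ S * (9 + Y) := by gcongr; linarith
    _ ≤ C * (15 * Y ^ 2 - 5 * Y) := by linarith
    _ ≤ c * (15 * Y ^ 2 - 5 * Y) := by gcongr; nlinarith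

theorem one_le_negLogCosSq_div_sq {x : ℝ} (hx : 0 < x) (hx' : x < π / 2) :
    1 ≤ negLogCosSq x / x ^ 2 := by
  rw [one_le_div (by positivity)]
  exact sq_le_negLogCosSq hx.le hx'

theorem sin_div_mul_le {x : ℝ} (hx : 0 < x) (hx' : x ≤ 6 / 5) :
    sin x / x * (9 + negLogCosSq x / x ^ 2) ≤
      cos x * (15 * (negLogCosSq x / x ^ 2) ^ 2 - 5 * (negLogCosSq x / x ^ 2)) := by
  have hz0 : 0 ≤ x ^ 2 := sq_nonneg x
  have hz1 : x ^ 2 ≤ 144 / 100 := by nlinarith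
  refine mul_nine_add_le_mul_of_le (S := 1 - x ^ 2 / 6 + (x ^ 2) ^ 2 / 120)
    (C := 1 - x ^ 2 / 2 + (x ^ 2) ^ 2 / 24 - (x ^ 2) ^ 3 / 720) ?_ (by nlinarith) ?_
    (by nlinarith [sq_nonneg (x ^ 2)]) ?_ ?_ (sin_taylor_mul_le_cos_taylor_mul hz0 hz1 rfl)
  · rw [div_le_iff₀ hx]
    exact (sin_le_taylor_five hx.le).trans_eq (by ring)
  · exact (taylor_six_le_cos hx.le).trans_eq' (by ring)
  · have : 0 ≤ x ^ 2 / 6 + 2 * (x ^ 2) ^ 2 / 45 + 17 * (x ^ 2) ^ 3 / 1260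
        + 62 * (x ^ 2) ^ 4 / 14175 + 1382 * (x ^ 2) ^ 5 / 935550 := by positivity
    linarith
  · rw [le_div_iff₀ (by positivity)]
    exact (taylor_twelve_le_negLogCosSq hx.le
      (hx'.trans_lt six_fifths_lt_pi_div_two)).trans_eq' (by ring)

theorem two_mul_mul_add_one_le_mul_rpow {q E X : ℝ} (hq : 9 / 10 ≤ q) (hq1 : q ≤ 1) (hE : 0 ≤ E)
    (hX : 1 ≤ X) (h : E * (9 + X) ≤ 15 * X - 5) : 2 * q * E + 1 ≤ (2 * q + 1) * X ^ q := by
  have hbernoulli : X ^ (1 - q) ≤ 1 + (1 - q) * (X - 1) := by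
    simpa using rpow_one_add_le_one_add_mul_self (s := X - 1) (p := 1 - q) (by linarith)
      (by linarith) (by linarith)
  have hle : X ^ (1 - q) ≤ (9 + X) / 10 := by nlinarith
  have hpos : 0 < X ^ (1 - q) := by positivity
  have hE' : 2 * (E * X ^ (1 - q)) ≤ 3 * X - 1 := by
    have : E * X ^ (1 - q) ≤ E * ((9 + X) / 10) := by gcongr
    linarith
  refine le_of_mul_le_mul_right ?_ hpos
  calc (2 * q * E + 1) * X ^ (1 - q) ≤ (2 * q + 1) * X := by nlinarith
    _ = (2 * q + 1) * X ^ q * X ^ (1 - q) := by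
        rw [mul_assoc, ← rpow_add (by linarith), add_sub_cancel, rpow_one]

theorem two_mul_mul_tan_add_one_le {q x : ℝ} (hq : 9 / 10 ≤ q) (hq1 : q ≤ 1) (hx : 0 < x)
    (hx' : x ≤ 6 / 5) :
    2 * q * (x * tan x / negLogCosSq x) + 1 ≤ (2 * q + 1) * (negLogCosSq x / x ^ 2) ^ q := by
  have hlt : x < π / 2 := hx'.trans_lt six_fifths_lt_pi_div_two
  have hcos := cos_pos_of_nonneg_of_lt_pi_div_two hx.le hlt
  have hneg := negLogCosSq_pos hx hlt
  have htan := tan_nonneg_of_nonneg_of_le_pi_div_two hx.le hlt.le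
  have hX := one_le_negLogCosSq_div_sq hx hlt
  refine two_mul_mul_add_one_le_mul_rpow hq hq1 (by positivity) hX ?_
  have hsin : sin x / x =
      cos x * (x * tan x / negLogCosSq x * (negLogCosSq x / x ^ 2)) := by
    rw [tan_eq_sin_div_cos]; field_simp
  have key := sin_div_mul_le hx hx'
  rw [hsin] at key
  refine le_of_mul_le_mul_left (a := cos x * (negLogCosSq x / x ^ 2)) ?_ (by positivity)
  linarith

theorem hasDerivAt_rpow_sub_div {q x : ℝ} (hx : 0 < x) (hx' : x < π / 2) :
    HasDerivAt (fun x => (x ^ (-(2 * q)) - negLogCosSq x ^ (-q)) / x)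
      (((2 * q * (x * tan x / negLogCosSq x) + 1) * negLogCosSq x ^ (-q)
        - (2 * q + 1) * x ^ (-(2 * q))) / x ^ 2) x := by
  have hneg := negLogCosSq_pos hx hx'
  refine (((hasDerivAt_rpow_const (Or.inl hx.ne')).sub ((hasDerivAt_negLogCosSq hx.le
    hx').rpow_const (Or.inl hneg.ne'))).div (hasDerivAt_id' x) hx.ne').congr_deriv ?_
  rw [rpow_sub_one hx.ne', rpow_sub_one hneg.ne']
  simp only [Pi.sub_apply]
  field_simp
  ring

theorem antitoneOn_rpow_sub_div {q : ℝ} (hq : 9 / 10 ≤ q) (hq1 : q ≤ 1) :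
    AntitoneOn (fun x : ℝ => (x ^ (-(2 * q)) - negLogCosSq x ^ (-q)) / x)
      (Set.Ioc 0 (6 / 5)) := by
  have hderiv : ∀ x ∈ Set.Ioc (0 : ℝ) (6 / 5), HasDerivAt _ _ x := fun x hx =>
    hasDerivAt_rpow_sub_div (q := q) hx.1 (hx.2.trans_lt six_fifths_lt_pi_div_two)
  refine antitoneOn_of_hasDerivWithinAt_nonpos (convex_Ioc _ _)
    (fun x hx => (hderiv x hx).continuousAt.continuousWithinAt)
    (fun x hx => (hderiv x (interior_subset hx)).hasDerivWithinAt) (fun x hx => ?_)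
  obtain ⟨hx0, hx1⟩ := interior_subset hx
  have hneg := negLogCosSq_pos hx0 (hx1.trans_lt six_fifths_lt_pi_div_two)
  have hpow : (negLogCosSq x / x ^ 2) ^ q * negLogCosSq x ^ (-q) = x ^ (-(2 * q)) := by
    rw [div_rpow hneg.le (by positivity), rpow_neg hneg.le, rpow_neg hx0.le, rpow_mul hx0.le,
      rpow_two]
    field [(rpow_pos_of_pos hneg q).ne']
  refine div_nonpos_of_nonpos_of_nonneg (sub_nonpos.2 ?_) (sq_nonneg x)
  rw [← hpow, ← mul_assoc]
  gcongr
  exact two_mul_mul_tan_add_one_le hq hq1 hx0 hx1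

/-! ### Sums of gaps of a power function -/

/-- The increment of `t ↦ -t ^ (-p)` over the interval `(c - x, c + x)`. -/
noncomputable def rpowGap (p c x : ℝ) : ℝ := (c - x) ^ (-p) - (c + x) ^ (-p)

theorem rpowGap_nonneg {p c x : ℝ} (hp : 0 ≤ p) (hx : 0 ≤ x) (hxc : x < c) :
    0 ≤ rpowGap p c x :=
  sub_nonneg.2 (rpow_le_rpow_of_nonpos (by linarith) (by linarith) (by linarith))

theorem hasDerivAt_rpowGap {p c x : ℝ} (hx : 0 ≤ x) (hxc : x < c) :
    HasDerivAt (rpowGap p c) (p * ((c - x) ^ (-p - 1) + (c + x) ^ (-p - 1))) x := by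
  have hsub := ((hasDerivAt_id' x).const_sub c).rpow_const (p := -p)
    (Or.inl (by linarith : c - x ≠ 0))
  have hadd := ((hasDerivAt_id' x).const_add c).rpow_const (p := -p)
    (Or.inl (by linarith : c + x ≠ 0))
  exact (hsub.sub hadd).congr_deriv (by ring)

theorem hasDerivAt_deriv_rpowGap {p c x : ℝ} (hx : 0 ≤ x) (hxc : x < c) :
    HasDerivAt (fun x => p * ((c - x) ^ (-p - 1) + (c + x) ^ (-p - 1)))
      (p * ((p + 1) * rpowGap (p + 2) c x)) x := by
  have hsub := ((hasDerivAt_id' x).const_sub c).rpow_const (p := -p - 1)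
    (Or.inl (by linarith : c - x ≠ 0))
  have hadd := ((hasDerivAt_id' x).const_add c).rpow_const (p := -p - 1)
    (Or.inl (by linarith : c + x ≠ 0))
  refine ((hsub.add hadd).const_mul p).congr_deriv ?_
  rw [rpowGap, show -p - 1 - 1 = -(p + 2) by ring]
  ring

theorem convexOn_rpowGap {p : ℝ} (hp : 0 ≤ p) (c : ℝ) : ConvexOn ℝ (Set.Ico 0 c) (rpowGap p c) :=
  convexOn_of_hasDerivWithinAt2_nonneg (convex_Ico 0 c)
    (fun _ hx => (hasDerivAt_rpowGap hx.1 hx.2).continuousAt.continuousWithinAt)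
    (fun _ hx => (hasDerivAt_rpowGap (interior_subset hx).1
      (interior_subset hx).2).hasDerivWithinAt)
    (fun _ hx => (hasDerivAt_deriv_rpowGap (interior_subset hx).1
      (interior_subset hx).2).hasDerivWithinAt)
    (fun x hx => by
      have := rpowGap_nonneg (p := p + 2) (by linarith) (interior_subset hx).1
        (interior_subset hx).2
      positivity)

theorem rpowGap_div_le {p c x y : ℝ} (hp : 0 ≤ p) (hx : 0 < x) (hxy : x ≤ y) (hyc : y < c) :
    rpowGap p c x / x ≤ rpowGap p c y / y := by
  simpa [rpowGap] using (convexOn_rpowGap hp c).secant_mono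
    (a := 0) ⟨le_rfl, by linarith⟩ ⟨hx.le, by linarith⟩ ⟨by linarith, hyc⟩ hx.ne' (by linarith) hxy

/-- The sum of the increments of `t ↦ -t ^ (-p)` over the intervals `(kπ - x, kπ + x)`, `k ≥ 1`. -/
noncomputable def gapSum (p x : ℝ) : ℝ := ∑' k : ℕ, rpowGap p ((k + 1) * π) x

/-- The sum of the increments of `t ↦ -t ^ (-p)` over the complementary intervals
`(kπ + x, (k + 1)π - x)`, `k ≥ 0`, on which `|cos t| < cos x`. -/
noncomputable def cosGapSum (p x : ℝ) : ℝ := ∑' k : ℕ, rpowGap p ((k + 1 / 2) * π) (π / 2 - x)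

theorem sum_rpowGap_half (p x : ℝ) (n : ℕ) :
    ∑ k ∈ Finset.range n, rpowGap p ((k + 1 / 2) * π) (π / 2 - x) =
      x ^ (-p) - ∑ k ∈ Finset.range n, rpowGap p ((k + 1) * π) x - (n * π + x) ^ (-p) := by
  induction n with
  | zero => simp
  | succ n ih =>
    rw [Finset.sum_range_succ, Finset.sum_range_succ, ih]
    simp only [rpowGap]
    rw [show ((n : ℝ) + 1 / 2) * π - (π / 2 - x) = n * π + x by ring,
      show ((n : ℝ) + 1 / 2) * π + (π / 2 - x) = (n + 1) * π - x by ring]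
    push_cast; ring

theorem lt_natCast_add_one_mul_pi {x : ℝ} (hx : x < π) (k : ℕ) : x < (k + 1) * π := by
  have : (0 : ℝ) ≤ k * π := by positivity
  linarith

theorem pi_div_two_sub_lt {x : ℝ} (hx : 0 < x) (k : ℕ) : π / 2 - x < (k + 1 / 2) * π := by
  have : (0 : ℝ) ≤ k * π := by positivity
  linarith

section GapSum

variable {p x y : ℝ}

theorem summable_rpowGap (hp : 0 ≤ p) (hx : 0 < x) (hx' : x < π / 2) :
    Summable fun k : ℕ => rpowGap p ((k + 1) * π) x := by
  refine summable_of_sum_range_le (c := x ^ (-p))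
    (fun k => rpowGap_nonneg hp hx.le (lt_natCast_add_one_mul_pi (by linarith) k)) (fun n => ?_)
  have hnonneg : 0 ≤ ∑ k ∈ Finset.range n, rpowGap p ((k + 1 / 2) * π) (π / 2 - x) :=
    Finset.sum_nonneg fun k _ => rpowGap_nonneg hp (by linarith) (pi_div_two_sub_lt hx k)
  rw [sum_rpowGap_half] at hnonneg
  have : 0 ≤ (n * π + x) ^ (-p) := by positivity
  linarith

theorem hasSum_cosGapSum (hp : 0 < p) (hx : 0 < x) (hx' : x < π / 2) :
    HasSum (fun k : ℕ => rpowGap p ((k + 1 / 2) * π) (π / 2 - x)) (x ^ (-p) - gapSum p x) := by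
  rw [hasSum_iff_tendsto_nat_of_nonneg
    (fun k => rpowGap_nonneg hp.le (by linarith) (pi_div_two_sub_lt hx k))]
  simp only [sum_rpowGap_half]
  have htail : Tendsto (fun n : ℕ => (n * π + x) ^ (-p)) atTop (nhds 0) :=
    (tendsto_rpow_neg_atTop hp).comp <| tendsto_atTop_add_const_right _ _
      (tendsto_natCast_atTop_atTop.atTop_mul_const pi_pos)
  simpa [gapSum] using
    ((summable_rpowGap hp.le hx hx').hasSum.tendsto_sum_nat.const_sub (x ^ (-p))).sub htail

theorem cosGapSum_eq (hp : 0 < p) (hx : 0 < x) (hx' : x < π / 2) :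
    cosGapSum p x = x ^ (-p) - gapSum p x := (hasSum_cosGapSum hp hx hx').tsum_eq

theorem gapSum_div_le (hp : 0 ≤ p) (hx : 0 < x) (hxy : x ≤ y) (hy : y < π / 2) :
    gapSum p x / x ≤ gapSum p y / y := by
  simp only [gapSum, ← tsum_div_const]
  exact ((summable_rpowGap hp hx (by linarith)).div_const x).tsum_le_tsum
    (fun k => rpowGap_div_le hp hx hxy (lt_natCast_add_one_mul_pi (by linarith) k))
    ((summable_rpowGap hp (by linarith) hy).div_const y)

theorem cosGapSum_div_le (hp : 0 < p) (hx : 0 < x) (hxy : x ≤ y) (hy : y < π / 2) :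
    cosGapSum p y / (π / 2 - y) ≤ cosGapSum p x / (π / 2 - x) := by
  simp only [cosGapSum, ← tsum_div_const]
  exact ((hasSum_cosGapSum hp (by linarith) hy).summable.div_const _).tsum_le_tsum
    (fun k => rpowGap_div_le hp.le (by linarith) (by linarith) (pi_div_two_sub_lt hx k))
    ((hasSum_cosGapSum hp hx (by linarith)).summable.div_const _)

end GapSum

theorem add_le_add_of_concaveOn_of_monotoneOn {s : Set ℝ} {φ : ℝ → ℝ} {a b c d : ℝ}
    (hφ : ConcaveOn ℝ s φ) (hmono : MonotoneOn φ s) (ha : a ∈ s) (hd : d ∈ s) (hdb : d ≤ b)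
    (hdc : d ≤ c) (hba : b ≤ a) (hca : c ≤ a) (hsum : a + d ≤ b + c) :
    φ a + φ d ≤ φ b + φ c := by
  rcases (hdb.trans hba).eq_or_lt with rfl | hda
  · rw [le_antisymm hba hdb, le_antisymm hca hdc]
  have hchord : ∀ t, d ≤ t → t ≤ a → (a - t) * φ d + (t - d) * φ a ≤ (a - d) * φ t := by
    intro t hdt hta
    have hcomb := hφ.2 hd ha (div_nonneg (sub_nonneg.2 hta) (sub_pos.2 hda).le)
      (div_nonneg (sub_nonneg.2 hdt) (sub_pos.2 hda).le) (by field [(sub_pos.2 hda).ne'])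
    have hpt : (a - t) / (a - d) * d + (t - d) / (a - d) * a = t := by
      field [(sub_pos.2 hda).ne']
    rw [smul_eq_mul, smul_eq_mul, smul_eq_mul, smul_eq_mul, hpt, div_mul_eq_mul_div,
      div_mul_eq_mul_div, ← add_div, div_le_iff₀ (sub_pos.2 hda)] at hcomb
    linarith
  have hle := hmono hd ha hda.le
  refine le_of_mul_le_mul_left ?_ (sub_pos.2 hda)
  nlinarith [hchord b hdb hba, hchord c hdc hca]

theorem inv_pi_sub_sq_mem_Icc : ((π - 6 / 5) ^ 2)⁻¹ ∈ Set.Icc (265 / 1000) (1 / 3) := by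
  constructor
  · rw [le_inv_comm₀ (by norm_num) (by nlinarith [pi_gt_d4])]
    nlinarith [pi_gt_d4, pi_lt_d4]
  · rw [inv_le_comm₀ (by nlinarith [pi_gt_d4]) (by norm_num)]
    nlinarith [pi_gt_d4]

theorem inv_pi_add_sq_le : ((π + 6 / 5) ^ 2)⁻¹ ≤ 532 / 10000 := by
  rw [inv_le_comm₀ (by nlinarith [pi_gt_d4]) (by norm_num)]
  nlinarith [pi_gt_d4]

theorem inv_negLogCosSq_six_fifths_mem_Icc :
    (negLogCosSq (6 / 5))⁻¹ ∈ Set.Icc (483 / 1000) (1 / 2) := by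
  have hle := negLogCosSq_six_fifths_le
  have hge := two_le_negLogCosSq le_rfl six_fifths_lt_pi_div_two
  constructor
  · rw [le_inv_comm₀ (by norm_num) (by linarith)]; linarith
  · rw [inv_le_comm₀ (by linarith) (by norm_num)]; linarith

theorem rpow_neg_two_mul {t : ℝ} (ht : 0 ≤ t) (q : ℝ) : t ^ (-(2 * q)) = ((t ^ 2)⁻¹) ^ q := by
  rw [rpow_neg ht, rpow_mul ht, rpow_two, inv_rpow (sq_nonneg t)]

theorem cosGapSum_six_fifths_le {q : ℝ} (hq : 0 < q) (hq1 : q ≤ 1) :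
    cosGapSum (2 * q) (6 / 5) ≤ negLogCosSq (6 / 5) ^ (-q) := by
  have hlt := six_fifths_lt_pi_div_two
  have hneg := negLogCosSq_pos (by norm_num) hlt
  have hfirst : rpowGap (2 * q) π (6 / 5) ≤ gapSum (2 * q) (6 / 5) := by
    simpa [gapSum] using (summable_rpowGap (p := 2 * q) (by linarith) (by norm_num) hlt).le_tsum 0
      (fun k _ => rpowGap_nonneg (by linarith) (by norm_num)
        (lt_natCast_add_one_mul_pi (by linarith) k))
  rw [rpowGap, rpow_neg_two_mul (by linarith), rpow_neg_two_mul (by positivity)] at hfirst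
  rw [cosGapSum_eq (by linarith) (by norm_num) hlt, rpow_neg_two_mul (by norm_num),
    rpow_neg hneg.le, ← inv_rpow hneg.le]
  obtain ⟨hsub, hsub'⟩ := inv_pi_sub_sq_mem_Icc
  obtain ⟨hinv, hinv'⟩ := inv_negLogCosSq_six_fifths_mem_Icc
  have hadd := inv_pi_add_sq_le
  have := add_le_add_of_concaveOn_of_monotoneOn (concaveOn_rpow hq.le hq1)
    (fun x hx y _ hxy => rpow_le_rpow hx hxy hq.le) (a := ((6 / 5 : ℝ) ^ 2)⁻¹)
    (b := (negLogCosSq (6 / 5))⁻¹) (c := ((π - 6 / 5) ^ 2)⁻¹) (d := ((π + 6 / 5) ^ 2)⁻¹)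
    (Set.mem_Ici.2 (by positivity)) (Set.mem_Ici.2 (by positivity)) (by linarith) (by linarith)
    (by norm_num; linarith) (by norm_num; linarith) (by norm_num; linarith)
  linarith

theorem hasDerivAt_rpow_negLogCosSq_div {q x : ℝ} (hx : 0 < x) (hx' : x < π / 2) :
    HasDerivAt (fun x => negLogCosSq x ^ (-q) / (π / 2 - x))
      (negLogCosSq x ^ (-q) * (1 - 2 * q * (tan x * (π / 2 - x)) / negLogCosSq x)
        / (π / 2 - x) ^ 2) x := by
  have hneg := negLogCosSq_pos hx hx'
  refine (((hasDerivAt_negLogCosSq hx.le hx').rpow_const (Or.inl hneg.ne')).div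
    ((hasDerivAt_id' x).const_sub _) (by linarith)).congr_deriv ?_
  rw [rpow_sub_one hneg.ne']
  ring

theorem monotoneOn_rpow_negLogCosSq_div {q : ℝ} (hq : 0 ≤ q) (hq1 : q ≤ 1) :
    MonotoneOn (fun x => negLogCosSq x ^ (-q) / (π / 2 - x)) (Set.Ico (6 / 5) (π / 2)) := by
  have hderiv : ∀ x ∈ Set.Ico (6 / 5) (π / 2), HasDerivAt _ _ x := fun x hx =>
    hasDerivAt_rpow_negLogCosSq_div (q := q) (by linarith [hx.1]) hx.2
  refine monotoneOn_of_hasDerivWithinAt_nonneg (convex_Ico _ _)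
    (fun x hx => (hderiv x hx).continuousAt.continuousWithinAt)
    (fun x hx => (hderiv x (interior_subset hx)).hasDerivWithinAt) (fun x hx => ?_)
  obtain ⟨hx1, hx2⟩ := interior_subset hx
  have hneg := two_le_negLogCosSq hx1 hx2
  have hle : 2 * q * (tan x * (π / 2 - x)) / negLogCosSq x ≤ 1 := by
    rw [div_le_one (by linarith)]
    nlinarith [tan_mul_pi_div_two_sub_le_one (by linarith) hx2]
  have := rpow_nonneg (by linarith : 0 ≤ negLogCosSq x) (-q)
  exact div_nonneg (mul_nonneg this (by linarith)) (sq_nonneg _)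

theorem cosGapSum_le_of_le_of_le_six_fifths {q x y : ℝ} (hq : 9 / 10 ≤ q) (hq1 : q ≤ 1)
    (hx : 0 < x) (hxy : x ≤ y) (hy : y ≤ 6 / 5)
    (h : cosGapSum (2 * q) x ≤ negLogCosSq x ^ (-q)) :
    cosGapSum (2 * q) y ≤ negLogCosSq y ^ (-q) := by
  have hlt := hy.trans_lt six_fifths_lt_pi_div_two
  rw [cosGapSum_eq (by linarith) (by linarith) (by linarith)] at h ⊢
  have hdiv : (y ^ (-(2 * q)) - negLogCosSq y ^ (-q)) / y ≤ gapSum (2 * q) y / y :=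
    calc _ ≤ (x ^ (-(2 * q)) - negLogCosSq x ^ (-q)) / x :=
          antitoneOn_rpow_sub_div hq hq1 ⟨hx, by linarith⟩ ⟨by linarith, hy⟩ hxy
      _ ≤ gapSum (2 * q) x / x := by gcongr; linarith
      _ ≤ _ := gapSum_div_le (by linarith) hx hxy hlt
  rw [div_le_div_iff_of_pos_right (by linarith)] at hdiv
  linarith

theorem cosGapSum_le_of_six_fifths_le {q x : ℝ} (hq : 0 < q) (hq1 : q ≤ 1) (hx : 6 / 5 ≤ x)
    (hx' : x < π / 2) : cosGapSum (2 * q) x ≤ negLogCosSq x ^ (-q) := by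
  have hlt := six_fifths_lt_pi_div_two
  have hdiv : cosGapSum (2 * q) x / (π / 2 - x) ≤ negLogCosSq x ^ (-q) / (π / 2 - x) :=
    calc _ ≤ cosGapSum (2 * q) (6 / 5) / (π / 2 - 6 / 5) :=
          cosGapSum_div_le (by linarith) (by norm_num) hx hx'
      _ ≤ negLogCosSq (6 / 5) ^ (-q) / (π / 2 - 6 / 5) :=
          div_le_div_of_nonneg_right (cosGapSum_six_fifths_le hq hq1) (by linarith)
      _ ≤ _ := monotoneOn_rpow_negLogCosSq_div hq.le hq1 ⟨le_rfl, hlt⟩ ⟨hx, hx'⟩ hx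
  rwa [div_le_div_iff_of_pos_right (by linarith)] at hdiv

/- Up to `6 / 5` the two sides of `gapSum ≥ x ^ (-2 * q) - negLogCosSq x ^ (-q)`, divided by `x`,
are monotone in opposite directions; beyond `6 / 5` the conclusion holds unconditionally. -/
theorem cosGapSum_le_of_le {q x y : ℝ} (hq : 9 / 10 ≤ q) (hq1 : q ≤ 1) (hx : 0 < x)
    (hxy : x ≤ y) (hy : y < π / 2) (h : cosGapSum (2 * q) x ≤ negLogCosSq x ^ (-q)) :
    cosGapSum (2 * q) y ≤ negLogCosSq y ^ (-q) := by
  rcases le_total y (6 / 5) with hy' | hy'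
  · exact cosGapSum_le_of_le_of_le_six_fifths hq hq1 hx hxy hy' h
  · exact cosGapSum_le_of_six_fifths_le (by linarith) hq1 hy' hy

/-! ### Integral comparison from a single crossing -/

theorem ennreal_mul_add_mul_le {a b x y : ENNReal} (hab : a ≤ b) (hxy : x ≤ y) :
    a * y + b * x ≤ a * x + b * y := by
  obtain ⟨d, rfl⟩ := exists_add_of_le hxy
  calc a * (x + d) + b * x = a * x + b * x + a * d := by ring
    _ ≤ a * x + b * x + b * d := by gcongr
    _ = a * x + b * (x + d) := by ring

theorem setLIntegral_mul_le_of_antitoneOn {α : Type*} [MeasurableSpace α] [LinearOrder α]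
    {μ : Measure α} {s : Set α} (hs : MeasurableSet s) {F G ρ : α → ENNReal} (hF : Measurable F)
    (hG : Measurable G) (hρ : Measurable ρ)
    (hcross : ∀ t ∈ s, ∀ t' ∈ s, t ≤ t' → F t ≤ G t → F t' ≤ G t') (hanti : AntitoneOn ρ s)
    {M : ENNReal} (hM : M ≠ ⊤) (hρM : ∀ t ∈ s, ρ t ≤ M) (hfin : ∫⁻ t in s, F t ∂μ ≠ ⊤)
    (h : ∫⁻ t in s, G t ∂μ ≤ ∫⁻ t in s, F t ∂μ) :
    ∫⁻ t in s, G t * ρ t ∂μ ≤ ∫⁻ t in s, F t * ρ t ∂μ := by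
  -- `c` is the value of the weight at the crossing.
  set c : ENNReal := ⨆ t ∈ {t ∈ s | F t ≤ G t}, ρ t
  have hcM : c ≠ ⊤ := ne_top_of_le_ne_top hM (iSup₂_le fun t ht => hρM t ht.1)
  have hpoint : ∀ t ∈ s, G t * ρ t + F t * c ≤ F t * ρ t + G t * c := by
    intro t ht
    rcases le_or_gt (F t) (G t) with hFG | hGF
    · rw [add_comm, add_comm (F t * ρ t), add_comm]
      have hρc : ρ t ≤ c := le_iSup₂_of_le t ⟨ht, hFG⟩ le_rfl
      simpa only [add_comm] using ennreal_mul_add_mul_le hFG hρc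
    · have hcρ : c ≤ ρ t := iSup₂_le fun t' ht' => hanti ht ht'.1
        (le_of_not_ge fun htt' => (hcross t' ht'.1 t ht htt' ht'.2).not_gt hGF)
      simpa only [add_comm] using ennreal_mul_add_mul_le hGF.le hcρ
  refine (ENNReal.add_le_add_iff_right (ENNReal.mul_ne_top hfin hcM)).1 ?_
  calc ∫⁻ t in s, G t * ρ t ∂μ + (∫⁻ t in s, F t ∂μ) * c
      = ∫⁻ t in s, G t * ρ t + F t * c ∂μ := by
        rw [lintegral_add_left (by fun_prop), lintegral_mul_const _ hF]
    _ ≤ ∫⁻ t in s, F t * ρ t + G t * c ∂μ := setLIntegral_mono' hs hpoint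
    _ = ∫⁻ t in s, F t * ρ t ∂μ + (∫⁻ t in s, G t ∂μ) * c := by
        rw [lintegral_add_left (by fun_prop), lintegral_mul_const _ hG]
    _ ≤ ∫⁻ t in s, F t * ρ t ∂μ + (∫⁻ t in s, F t ∂μ) * c := by gcongr

theorem intervalIntegrable_mul_abs_one_sub_rpow {s : ℝ} (hs : 1 ≤ s) (b : ℝ) :
    IntervalIntegrable (fun t : ℝ => s * |1 - t| ^ (s - 1)) volume 0 b := by
  have hs1 : 0 ≤ s - 1 := by linarith
  apply Continuous.intervalIntegrable
  fun_prop (disch := assumption)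

theorem integral_mul_abs_one_sub_rpow {s b : ℝ} (hs : 1 ≤ s) (hb : 0 ≤ b) (hb1 : b ≤ 1) :
    ∫ t in (0 : ℝ)..b, s * |1 - t| ^ (s - 1) = 1 - (1 - b) ^ s := by
  rw [intervalIntegral.integral_eq_sub_of_hasDerivAt_of_le (f := fun t => -(1 - t) ^ s) hb]
  · simp only [sub_zero, one_rpow]
    ring
  · have hpow : Continuous fun x : ℝ => x ^ s :=
      continuous_id.rpow_const fun x => Or.inr (by linarith)
    exact Continuous.continuousOn (by fun_prop)
  · intro t ht
    rw [abs_of_nonneg (by linarith [ht.2])]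
    exact (((hasDerivAt_id' t).const_sub 1).rpow_const (p := s) (Or.inr hs)).neg.congr_deriv
      (by ring)
  · exact intervalIntegrable_mul_abs_one_sub_rpow hs b

theorem lintegral_one_sub_rpow {α : Type*} [MeasurableSpace α] (μ : Measure α) {f : α → ℝ}
    (hf : Measurable f) (hf0 : ∀ x, 0 ≤ f x) (hf1 : ∀ x, f x ≤ 1) {s : ℝ} (hs : 1 ≤ s) :
    ∫⁻ x, ENNReal.ofReal (1 - f x ^ s) ∂μ = ∫⁻ t in Set.Ioo (0 : ℝ) 1,
      μ {x | t < 1 - f x} * ENNReal.ofReal (s * (1 - t) ^ (s - 1)) := by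
  have hlayer := lintegral_comp_eq_lintegral_meas_lt_mul μ (f := fun x => 1 - f x)
    (g := fun t => s * |1 - t| ^ (s - 1)) (ae_of_all _ fun x => sub_nonneg.2 (hf1 x))
    (by fun_prop) (fun t _ => intervalIntegrable_mul_abs_one_sub_rpow hs t)
    (ae_of_all _ fun t => by positivity)
  have hprim : ∀ x, ∫ t in (0 : ℝ)..(1 - f x), s * |1 - t| ^ (s - 1) = 1 - f x ^ s := fun x => by
    rw [integral_mul_abs_one_sub_rpow hs (by linarith [hf1 x]) (by linarith [hf0 x]),
      sub_sub_cancel]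
  simp only [hprim] at hlayer
  have htail : ∀ t ∈ Set.Ici (1 : ℝ), μ {x | t < 1 - f x} * ENNReal.ofReal (s * |1 - t| ^ (s - 1)) =
      0 := fun t ht => by
    have hempty : {x | t < 1 - f x} = ∅ := Set.eq_empty_of_forall_notMem fun x hx =>
      absurd (Set.mem_ofPred_eq ▸ hx) (by linarith [hf0 x, Set.mem_Ici.1 ht])
    rw [hempty, measure_empty, zero_mul]
  rw [hlayer, ← Set.Ioo_union_Ici_eq_Ioi one_pos, lintegral_union measurableSet_Ici
    (Set.disjoint_left.2 fun t ht ht' => ht.2.not_ge ht'),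
    setLIntegral_congr_fun measurableSet_Ici htail, lintegral_zero, add_zero]
  exact setLIntegral_congr_fun measurableSet_Ioo fun t ht => by rw [abs_of_pos (by linarith [ht.2])]

theorem lintegral_one_sub_rpow_le {α : Type*} [MeasurableSpace α] {μ : Measure α} {f g : α → ℝ}
    (hf : Measurable f) (hf0 : ∀ x, 0 ≤ f x) (hf1 : ∀ x, f x ≤ 1)
    (hg : Measurable g) (hg0 : ∀ x, 0 ≤ g x) (hg1 : ∀ x, g x ≤ 1)
    (hcross : ∀ t ∈ Set.Ioo (0 : ℝ) 1, ∀ t' ∈ Set.Ioo (0 : ℝ) 1, t ≤ t' →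
      μ {x | t < 1 - f x} ≤ μ {x | t < 1 - g x} → μ {x | t' < 1 - f x} ≤ μ {x | t' < 1 - g x})
    {p : ℝ} (hp : 1 ≤ p) (hfin : ∫⁻ x, ENNReal.ofReal (1 - f x ^ p) ∂μ ≠ ⊤)
    (h : ∫⁻ x, ENNReal.ofReal (1 - g x ^ p) ∂μ ≤ ∫⁻ x, ENNReal.ofReal (1 - f x ^ p) ∂μ)
    {s : ℝ} (hps : p ≤ s) :
    ∫⁻ x, ENNReal.ofReal (1 - g x ^ s) ∂μ ≤ ∫⁻ x, ENNReal.ofReal (1 - f x ^ s) ∂μ := by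
  have htail : ∀ u : α → ℝ, Measurable fun t : ℝ => μ {x | t < 1 - u x} := fun u =>
    Antitone.measurable fun t t' htt' => measure_mono fun x hx => lt_of_le_of_lt htt' hx
  have hlayer : ∀ u : α → ℝ, Measurable u → (∀ x, 0 ≤ u x) → (∀ x, u x ≤ 1) →
      ∫⁻ x, ENNReal.ofReal (1 - u x ^ s) ∂μ = ∫⁻ t in Set.Ioo (0 : ℝ) 1,
        μ {x | t < 1 - u x} * ENNReal.ofReal (p * (1 - t) ^ (p - 1)) *
          ENNReal.ofReal (s / p * (1 - t) ^ (s - p)) := fun u hu hu0 hu1 => by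
    rw [lintegral_one_sub_rpow μ hu hu0 hu1 (hp.trans hps)]
    refine setLIntegral_congr_fun measurableSet_Ioo fun t ht => ?_
    have ht1 : 0 < 1 - t := sub_pos.2 ht.2
    rw [mul_assoc, ← ENNReal.ofReal_mul (by positivity),
      show s - 1 = (p - 1) + (s - p) by ring, rpow_add ht1]
    field_simp
  have hsp : 0 ≤ s / p := div_nonneg (by linarith) (by linarith)
  rw [lintegral_one_sub_rpow μ hf hf0 hf1 hp] at hfin h
  rw [lintegral_one_sub_rpow μ hg hg0 hg1 hp] at h
  rw [hlayer f hf hf0 hf1, hlayer g hg hg0 hg1]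
  refine setLIntegral_mul_le_of_antitoneOn measurableSet_Ioo ((htail f).mul (by fun_prop))
    ((htail g).mul (by fun_prop)) (by fun_prop) (fun t ht t' ht' htt' hle => ?_) ?_
    (M := ENNReal.ofReal (s / p)) ENNReal.ofReal_ne_top ?_ hfin h
  · have hpos : 0 < p * (1 - t) ^ (p - 1) :=
      mul_pos (by linarith) (rpow_pos_of_pos (sub_pos.2 ht.2) _)
    exact mul_le_mul_left (hcross t ht t' ht' htt' ((ENNReal.mul_le_mul_iff_left
      (ENNReal.ofReal_pos.2 hpos).ne' ENNReal.ofReal_ne_top).1 hle)) _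
  · intro t _ t' ht' htt'
    have hle : (1 - t') ^ (s - p) ≤ (1 - t) ^ (s - p) :=
      rpow_le_rpow (by linarith [ht'.2]) (by linarith) (by linarith)
    exact ENNReal.ofReal_le_ofReal (mul_le_mul_of_nonneg_left hle hsp)
  · exact fun t ht => ENNReal.ofReal_le_ofReal (mul_le_of_le_one_right hsp
      (rpow_le_one (by linarith [ht.2]) (by linarith [ht.1]) (by linarith)))

/-! ### Distribution functions under a power density -/

/-- The measure on `(0, ∞)` with density `x ^ (-p - 1)`. -/
noncomputable def powMeasure (p : ℝ) : Measure ℝ :=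
  (volume.restrict (Set.Ioi 0)).withDensity fun x => ENNReal.ofReal (x ^ (-p - 1))

theorem lintegral_powMeasure (p : ℝ) {f : ℝ → ENNReal} (hf : Measurable f) :
    ∫⁻ x, f x ∂powMeasure p = ∫⁻ x in Set.Ioi 0, ENNReal.ofReal (x ^ (-p - 1)) * f x :=
  lintegral_withDensity_eq_lintegral_mul _ (by fun_prop) hf

theorem powMeasure_apply (p : ℝ) {A B : Set ℝ} (hA : MeasurableSet A) (hB : A ∩ Set.Ioi 0 = B) :
    powMeasure p A = ∫⁻ x in B, ENNReal.ofReal (x ^ (-p - 1)) := by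
  rw [powMeasure, withDensity_apply _ hA, Measure.restrict_restrict hA, hB]

theorem lintegral_Ioo_rpow {p a b : ℝ} (hp : 0 < p) (ha : 0 < a) (hab : a ≤ b) :
    ∫⁻ x in Set.Ioo a b, ENNReal.ofReal (x ^ (-p - 1)) =
      ENNReal.ofReal ((a ^ (-p) - b ^ (-p)) / p) := by
  have hz : (0 : ℝ) ∉ Set.uIcc a b := by
    rw [Set.uIcc_of_le hab]; exact fun h => absurd h.1 (not_le.2 ha)
  have hi : IntegrableOn (fun x : ℝ => x ^ (-p - 1)) (Set.Ioc a b) :=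
    (intervalIntegrable_iff_integrableOn_Ioc_of_le hab).1
      (intervalIntegral.intervalIntegrable_rpow (Or.inr hz))
  rw [Measure.restrict_congr_set Ioo_ae_eq_Ioc, ← ofReal_integral_eq_lintegral_ofReal hi,
    ← intervalIntegral.integral_of_le hab, integral_rpow (Or.inr ⟨by linarith, hz⟩)]
  · congr 1
    rw [show -p - 1 + 1 = -p by ring, div_neg, ← neg_div, neg_sub]
  · filter_upwards [ae_restrict_mem measurableSet_Ioc] with x hx
    exact rpow_nonneg (ha.trans hx.1).le _

theorem lintegral_Ioi_rpow {p a : ℝ} (hp : 0 < p) (ha : 0 < a) :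
    ∫⁻ x in Set.Ioi a, ENNReal.ofReal (x ^ (-p - 1)) = ENNReal.ofReal (a ^ (-p) / p) := by
  rw [← ofReal_integral_eq_lintegral_ofReal (integrableOn_Ioi_rpow_of_lt (by linarith) ha),
    integral_Ioi_rpow_of_lt (by linarith) ha]
  · congr 1
    rw [show -p - 1 + 1 = -p by ring, div_neg, ← neg_div, neg_neg]
  · filter_upwards [ae_restrict_mem measurableSet_Ioi] with x hx
    exact rpow_nonneg (ha.trans hx).le _

theorem abs_cos_add_natCast_mul_pi (y : ℝ) (k : ℕ) : |cos (y + k * π)| = |cos y| := by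
  rw [cos_add_nat_mul_pi, abs_mul, abs_pow, abs_neg, abs_one, one_pow, one_mul]

theorem abs_cos_lt_cos_iff {θ y : ℝ} (hθ : 0 ≤ θ) (hθ' : θ ≤ π) (hy : 0 ≤ y) (hy' : y ≤ π) :
    |cos y| < cos θ ↔ θ < y ∧ y < π - θ := by
  have hpos := strictAntiOn_cos.lt_iff_gt (a := y) (b := θ) ⟨hy, hy'⟩ ⟨hθ, hθ'⟩
  have hneg := strictAntiOn_cos.lt_iff_gt (a := π - y) (b := θ)
    ⟨sub_nonneg.2 hy', sub_le_self π hy⟩ ⟨hθ, hθ'⟩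
  rw [cos_pi_sub] at hneg
  rw [abs_lt, neg_lt, hpos, hneg, lt_sub_comm, and_comm]

theorem abs_cos_lt_cos_iff_of_mem_Icc {θ x : ℝ} (hθ : 0 ≤ θ) (hθ' : θ ≤ π) {k : ℕ}
    (hx : x ∈ Set.Icc (k * π) ((k + 1) * π)) :
    |cos x| < cos θ ↔ x ∈ Set.Ioo (k * π + θ) ((k + 1) * π - θ) := by
  rw [← sub_add_cancel x (k * π), abs_cos_add_natCast_mul_pi,
    abs_cos_lt_cos_iff hθ hθ' (by linarith [hx.1]) (by linarith [hx.2]), sub_add_cancel]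
  exact and_congr (by constructor <;> intro h <;> linarith)
    (by constructor <;> intro h <;> linarith)

theorem setOf_abs_cos_lt_inter_Ioi {θ : ℝ} (hθ : 0 ≤ θ) (hθ' : θ ≤ π) :
    {x | |cos x| < cos θ} ∩ Set.Ioi 0 = ⋃ k : ℕ, Set.Ioo (k * π + θ) ((k + 1) * π - θ) := by
  ext x
  simp only [Set.mem_inter_iff, Set.mem_ofPred_eq, Set.mem_Ioi, Set.mem_iUnion]
  constructor
  · rintro ⟨hx, hx0⟩
    have hfloor := Nat.floor_le (div_nonneg hx0.le pi_pos.le)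
    have hlt := Nat.lt_floor_add_one (x / π)
    rw [le_div_iff₀ pi_pos] at hfloor
    rw [div_lt_iff₀ pi_pos] at hlt
    exact ⟨⌊x / π⌋₊, (abs_cos_lt_cos_iff_of_mem_Icc hθ hθ' ⟨hfloor, hlt.le⟩).1 hx⟩
  · rintro ⟨k, hk⟩
    have hk0 : (0 : ℝ) ≤ k * π := by positivity
    exact ⟨(abs_cos_lt_cos_iff_of_mem_Icc hθ hθ' ⟨by linarith [hk.1], by linarith [hk.2]⟩).2 hk,
      by linarith [hk.1]⟩

theorem pairwise_disjoint_Ioo_natCast_mul_pi {θ : ℝ} (hθ : 0 ≤ θ) :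
    Pairwise (Function.onFun Disjoint fun k : ℕ => Set.Ioo (k * π + θ) ((k + 1) * π - θ)) := by
  refine (pairwise_disjoint_on _).2 fun i j hij => Set.disjoint_left.2 fun x hx hx' => ?_
  have hle : ((i : ℝ) + 1) * π ≤ j * π := by
    gcongr
    exact_mod_cast hij
  linarith [hx.2, hx'.1]

theorem powMeasure_abs_cos_lt {p θ : ℝ} (hp : 0 < p) (hθ : 0 < θ) (hθ' : θ < π / 2) :
    powMeasure p {x | |cos x| < cos θ} = ENNReal.ofReal (cosGapSum p θ / p) := by
  rw [powMeasure_apply p (measurableSet_lt (by fun_prop) (by fun_prop))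
      (setOf_abs_cos_lt_inter_Ioi hθ.le (by linarith)),
    lintegral_iUnion (fun _ => measurableSet_Ioo) (pairwise_disjoint_Ioo_natCast_mul_pi hθ.le),
    cosGapSum, ← tsum_div_const, ENNReal.ofReal_tsum_of_nonneg
      (fun k => div_nonneg (rpowGap_nonneg hp.le (by linarith) (pi_div_two_sub_lt hθ k)) hp.le)
      ((hasSum_cosGapSum hp hθ hθ').summable.div_const p)]
  refine tsum_congr fun k => ?_
  have hk : (0 : ℝ) ≤ k * π := by positivity
  rw [lintegral_Ioo_rpow hp (by linarith) (by linarith), rpowGap,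
    show ((k : ℝ) + 1 / 2) * π - (π / 2 - θ) = k * π + θ by ring,
    show ((k : ℝ) + 1 / 2) * π + (π / 2 - θ) = (k + 1) * π - θ by ring]

theorem powMeasure_exp_lt {p θ : ℝ} (hp : 0 < p) (hθ : 0 < θ) (hθ' : θ < π / 2) :
    powMeasure p {x | exp (-(x ^ 2 / 2)) < cos θ} =
      ENNReal.ofReal (negLogCosSq θ ^ (-(p / 2)) / p) := by
  have hneg := negLogCosSq_pos hθ hθ'
  have hset : {x | exp (-(x ^ 2 / 2)) < cos θ} ∩ Set.Ioi 0 = Set.Ioi (√(negLogCosSq θ)) := by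
    ext x
    have hiff : exp (-(x ^ 2 / 2)) < cos θ ↔ negLogCosSq θ < x ^ 2 := by
      rw [← lt_log_iff_exp_lt (cos_pos_of_nonneg_of_lt_pi_div_two hθ.le hθ'), negLogCosSq]
      constructor <;> intro h <;> linarith
    simp only [Set.mem_inter_iff, Set.mem_ofPred_eq, Set.mem_Ioi, hiff]
    exact ⟨fun ⟨hx, hx0⟩ => (sqrt_lt' hx0).2 hx, fun hx =>
      have hx0 := (sqrt_nonneg _).trans_lt hx
      ⟨(sqrt_lt' hx0).1 hx, hx0⟩⟩
  rw [powMeasure_apply p (measurableSet_lt (by fun_prop) (by fun_prop)) hset,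
    lintegral_Ioi_rpow hp (sqrt_pos.2 hneg), sqrt_eq_rpow, ← rpow_mul hneg.le]
  ring_nf

theorem powMeasure_le_iff {p t : ℝ} (hp : 0 < p) (ht : t ∈ Set.Ioo (0 : ℝ) 1) :
    powMeasure p {x | t < 1 - |cos x|} ≤ powMeasure p {x | t < 1 - exp (-(x ^ 2 / 2))} ↔
      cosGapSum p (arccos (1 - t)) ≤ negLogCosSq (arccos (1 - t)) ^ (-(p / 2)) := by
  have hθ : 0 < arccos (1 - t) := arccos_pos.2 (by linarith [ht.1])
  have hθ' : arccos (1 - t) < π / 2 := arccos_lt_pi_div_two.2 (by linarith [ht.2])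
  have hneg := negLogCosSq_pos hθ hθ'
  have hcos := powMeasure_abs_cos_lt hp hθ hθ'
  have hexp := powMeasure_exp_lt hp hθ hθ'
  rw [cos_arccos (by linarith [ht.2]) (by linarith [ht.1])] at hcos hexp
  simp only [lt_sub_comm (a := t), hcos, hexp]
  rw [ENNReal.ofReal_le_ofReal_iff (by positivity), div_le_div_iff_of_pos_right hp]

theorem powMeasure_le_of_le {p t t' : ℝ} (hp : 9 / 5 ≤ p) (hp2 : p ≤ 2)
    (ht : t ∈ Set.Ioo (0 : ℝ) 1) (ht' : t' ∈ Set.Ioo (0 : ℝ) 1) (htt' : t ≤ t')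
    (h : powMeasure p {x | t < 1 - |cos x|} ≤ powMeasure p {x | t < 1 - exp (-(x ^ 2 / 2))}) :
    powMeasure p {x | t' < 1 - |cos x|} ≤ powMeasure p {x | t' < 1 - exp (-(x ^ 2 / 2))} := by
  rw [powMeasure_le_iff (by linarith) ht] at h
  rw [powMeasure_le_iff (by linarith) ht']
  obtain ⟨q, rfl⟩ : ∃ q, p = 2 * q := ⟨p / 2, by ring⟩
  rw [mul_div_cancel_left₀ q two_ne_zero] at h ⊢
  exact cosGapSum_le_of_le (by linarith) (by linarith) (arccos_pos.2 (by linarith [ht.1]))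
    (arccos_le_arccos (by linarith)) (arccos_lt_pi_div_two.2 (by linarith [ht'.2])) h

theorem lintegral_comp_mul_left_Ioi {u : ℝ} (hu : 0 < u) {g : ℝ → ENNReal} (hg : Measurable g) :
    ∫⁻ x in Set.Ioi 0, g (u * x) = ENNReal.ofReal u⁻¹ * ∫⁻ x in Set.Ioi 0, g x := by
  have hpre : (fun x => u * x) ⁻¹' Set.Ioi 0 = Set.Ioi 0 := by
    ext x
    simp only [Set.mem_preimage, Set.mem_Ioi, mul_pos_iff_of_pos_left hu]
  rw [← hpre, ← setLIntegral_map measurableSet_Ioi hg (measurable_const_mul u), hpre,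
    Real.map_volume_mul_left hu.ne', Measure.restrict_smul, lintegral_smul_measure,
    abs_of_pos (inv_pos.2 hu), smul_eq_mul]

theorem lintegral_powMeasure_comp_mul (p : ℝ) {u : ℝ} (hu : 0 < u) {f : ℝ → ENNReal}
    (hf : Measurable f) :
    ∫⁻ x, f (u * x) ∂powMeasure p = ENNReal.ofReal (u ^ p) * ∫⁻ x, f x ∂powMeasure p := by
  rw [lintegral_powMeasure p (by fun_prop : Measurable fun x => f (u * x)),
    lintegral_powMeasure p hf]
  have hrescale : ∀ x ∈ Set.Ioi (0 : ℝ), ENNReal.ofReal (x ^ (-p - 1)) * f (u * x) =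
      ENNReal.ofReal (u ^ (p + 1)) *
        (ENNReal.ofReal ((u * x) ^ (-p - 1)) * f (u * x)) := fun x hx => by
    rw [← mul_assoc, ← ENNReal.ofReal_mul (by positivity), mul_rpow hu.le hx.le, ← mul_assoc,
      ← rpow_add hu, show p + 1 + (-p - 1) = 0 by ring, rpow_zero, one_mul]
  rw [setLIntegral_congr_fun measurableSet_Ioi hrescale, lintegral_const_mul _ (by fun_prop),
    lintegral_comp_mul_left_Ioi hu (g := fun x => ENNReal.ofReal (x ^ (-p - 1)) * f x)
      (by fun_prop), ← mul_assoc, ← ENNReal.ofReal_mul (by positivity), rpow_add_one hu.ne',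
    mul_inv_cancel_right₀ hu.ne']

/-- The integral of `1 - cos` against `powMeasure p`. -/
noncomputable def cosMoment (p : ℝ) : ENNReal :=
  ∫⁻ x, ENNReal.ofReal (1 - cos x) ∂powMeasure p

theorem setLIntegral_Ioc_one_sub_cos_ne_top {p : ℝ} (hp2 : p < 2) :
    ∫⁻ x in Set.Ioc 0 1, ENNReal.ofReal (x ^ (-p - 1)) * ENNReal.ofReal (1 - cos x) ≠ ⊤ := by
  have hint : IntegrableOn (fun x : ℝ => x ^ (1 - p)) (Set.Ioc 0 1) :=
    (intervalIntegrable_iff_integrableOn_Ioc_of_le zero_le_one).1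
      (intervalIntegral.intervalIntegrable_rpow' (by linarith))
  refine ne_top_of_le_ne_top hint.lintegral_lt_top.ne
    (setLIntegral_mono (by fun_prop) fun x hx => ?_)
  rw [← ENNReal.ofReal_mul (rpow_nonneg hx.1.le _)]
  apply ENNReal.ofReal_le_ofReal
  calc x ^ (-p - 1) * (1 - cos x) ≤ x ^ (-p - 1) * x ^ 2 :=
        mul_le_mul_of_nonneg_left (by nlinarith [one_sub_sq_div_two_le_cos (x := x)])
          (rpow_nonneg hx.1.le _)
    _ = x ^ (1 - p) := by rw [← rpow_natCast, ← rpow_add hx.1]; ring_nf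

theorem setLIntegral_Ioi_one_sub_cos_ne_top {p : ℝ} (hp : 0 < p) :
    ∫⁻ x in Set.Ioi 1, ENNReal.ofReal (x ^ (-p - 1)) * ENNReal.ofReal (1 - cos x) ≠ ⊤ := by
  have hint : IntegrableOn (fun x : ℝ => x ^ (-p - 1) * 2) (Set.Ioi 1) :=
    (integrableOn_Ioi_rpow_of_lt (by linarith) one_pos).mul_const 2
  refine ne_top_of_le_ne_top hint.lintegral_lt_top.ne
    (setLIntegral_mono (by fun_prop) fun x hx => ?_)
  have hx0 : 0 ≤ x := zero_le_one.trans (Set.mem_Ioi.1 hx).le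
  rw [← ENNReal.ofReal_mul (rpow_nonneg hx0 _)]
  exact ENNReal.ofReal_le_ofReal
    (mul_le_mul_of_nonneg_left (by linarith [neg_one_le_cos x]) (rpow_nonneg hx0 _))

theorem cosMoment_ne_top {p : ℝ} (hp : 0 < p) (hp2 : p < 2) : cosMoment p ≠ ⊤ := by
  rw [cosMoment, lintegral_powMeasure p (by fun_prop), ← Set.Ioc_union_Ioi_eq_Ioi zero_le_one]
  exact ne_top_of_le_ne_top (ENNReal.add_ne_top.2
    ⟨setLIntegral_Ioc_one_sub_cos_ne_top hp2, setLIntegral_Ioi_one_sub_cos_ne_top hp⟩)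
    (lintegral_union_le _ _ _)

theorem cosMoment_ne_zero (p : ℝ) : cosMoment p ≠ 0 := by
  have hsub : Set.Ioo 0 π ⊆ (Function.support fun x : ℝ =>
      ENNReal.ofReal (x ^ (-p - 1)) * ENNReal.ofReal (1 - cos x)) ∩ Set.Ioi 0 := fun x hx => by
    have hcos : cos x < 1 := by
      simpa only [cos_zero] using cos_lt_cos_of_nonneg_of_le_pi le_rfl hx.2.le hx.1
    exact ⟨mul_ne_zero (ENNReal.ofReal_pos.2 (rpow_pos_of_pos hx.1 _)).ne'
      (ENNReal.ofReal_pos.2 (sub_pos.2 hcos)).ne', hx.1⟩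
  rw [cosMoment, lintegral_powMeasure p (by fun_prop)]
  refine ((setLIntegral_pos_iff (by fun_prop)).2 (lt_of_lt_of_le ?_ (measure_mono hsub))).ne'
  simp [pi_pos]

theorem lintegral_one_sub_cos_mul {p : ℝ} (hp : 0 < p) (u : ℝ) :
    ∫⁻ x, ENNReal.ofReal (1 - cos (u * x)) ∂powMeasure p =
      ENNReal.ofReal (|u| ^ p) * cosMoment p := by
  rcases eq_or_ne u 0 with rfl | hu
  · simp [zero_rpow hp.ne']
  · rw [cosMoment, ← lintegral_powMeasure_comp_mul p (abs_pos.2 hu) (by fun_prop)]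
    refine lintegral_congr fun x => ?_
    rcases abs_choice u with h | h <;> rw [h]
    rw [neg_mul, cos_neg]

instance sFinite_powMeasure (p : ℝ) : SFinite (powMeasure p) := by
  unfold powMeasure; infer_instance

/-! ### The Gaussian comparison -/

/-- The absolute moment of order `p` of a standard Gaussian random variable. -/
noncomputable def gaussAbsMoment (p : ℝ) : ℝ := 2 ^ (p / 2) * Gamma ((p + 1) / 2) / √π

theorem gaussAbsMoment_pos {p : ℝ} (hp : -1 < p) : 0 < gaussAbsMoment p := by
  have hGamma := Gamma_pos_of_pos (by linarith : 0 < (p + 1) / 2)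
  unfold gaussAbsMoment
  positivity

theorem gaussAbsMoment_le_iff_Gamma_le {p : ℝ} :
    gaussAbsMoment p ≤ 2 ^ (p / 2 - 1) ↔ Gamma ((p + 1) / 2) ≤ √π / 2 := by
  have hpos : (0 : ℝ) < 2 ^ (p / 2) := by positivity
  rw [gaussAbsMoment, rpow_sub_one two_ne_zero, div_le_iff₀ (sqrt_pos.2 pi_pos),
    div_mul_eq_mul_div, mul_div_assoc, mul_le_mul_iff_right₀ hpos]

theorem integral_abs_rpow_gaussianReal {p : ℝ} (hp : -1 < p) :
    ∫ y, |y| ^ p ∂ProbabilityTheory.gaussianReal 0 1 = gaussAbsMoment p := by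
  rw [ProbabilityTheory.integral_gaussianReal_eq_integral_smul one_ne_zero]
  have hdensity : ∀ y : ℝ, ProbabilityTheory.gaussianPDFReal 0 1 y • |y| ^ p =
      (fun x => (√(2 * π))⁻¹ * (x ^ p * exp (-(1 / 2) * x ^ (2 : ℝ)))) |y| := fun y => by
    simp only [ProbabilityTheory.gaussianPDFReal, smul_eq_mul, NNReal.coe_one, mul_one, sub_zero]
    rw [rpow_two, sq_abs, show -y ^ 2 / 2 = -(1 / 2) * y ^ 2 by ring]
    ring
  simp only [hdensity]
  rw [integral_comp_abs (f := fun x => (√(2 * π))⁻¹ * (x ^ p * exp (-(1 / 2) * x ^ (2 : ℝ)))),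
    integral_const_mul, integral_rpow_mul_exp_neg_mul_rpow two_pos hp (by norm_num),
    gaussAbsMoment, sqrt_mul two_pos.le, one_div, inv_rpow two_pos.le, ← rpow_neg two_pos.le,
    show -(-(p + 1) / 2) = p / 2 + 1 / 2 by ring, rpow_add two_pos, ← sqrt_eq_rpow]
  field_simp

theorem lintegral_abs_rpow_gaussianReal {p : ℝ} (hp : 0 < p) :
    ∫⁻ y, ENNReal.ofReal (|y| ^ p) ∂ProbabilityTheory.gaussianReal 0 1 =
      ENNReal.ofReal (gaussAbsMoment p) := by
  have hint := (ProbabilityTheory.memLp_id_gaussianReal (μ := 0) (v := 1)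
    p.toNNReal).integrable_norm_rpow (by simpa using hp) (by simp)
  simp only [id_eq, norm_eq_abs, ENNReal.coe_toReal, coe_toNNReal p hp.le] at hint
  rw [← integral_abs_rpow_gaussianReal (by linarith), ofReal_integral_eq_lintegral_ofReal hint
    (ae_of_all _ fun y => by positivity)]

theorem integrable_cos_gaussianReal (x : ℝ) :
    Integrable (fun y : ℝ => cos (x * y)) (ProbabilityTheory.gaussianReal 0 1) :=
  Integrable.of_bound (by fun_prop) 1 (ae_of_all _ fun _ => abs_cos_le_one _)

theorem integral_cos_gaussianReal (x : ℝ) :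
    ∫ y, cos (x * y) ∂ProbabilityTheory.gaussianReal 0 1 = exp (-(x ^ 2 / 2)) := by
  have hint : Integrable (fun y : ℝ => Complex.exp (x * y * Complex.I))
      (ProbabilityTheory.gaussianReal 0 1) :=
    Integrable.of_bound (by fun_prop) 1 (ae_of_all _ fun y => by
      rw [← Complex.ofReal_mul, Complex.norm_exp_ofReal_mul_I])
  have hre : ∀ y : ℝ, cos (x * y) = RCLike.re (Complex.exp (x * y * Complex.I)) := fun y => by
    rw [← Complex.ofReal_mul, RCLike.re_eq_complex_re, Complex.exp_ofReal_mul_I_re]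
  have hchar : ∫ y : ℝ, Complex.exp (x * y * Complex.I) ∂ProbabilityTheory.gaussianReal 0 1 =
      Complex.ofReal (exp (-(x ^ 2 / 2))) := by
    rw [← charFun_apply_real, ProbabilityTheory.charFun_gaussianReal]
    push_cast
    simp
  simp only [hre]
  rw [integral_re hint, hchar, RCLike.re_eq_complex_re, Complex.ofReal_re]

theorem lintegral_one_sub_cos_gaussianReal (x : ℝ) :
    ∫⁻ y, ENNReal.ofReal (1 - cos (x * y)) ∂ProbabilityTheory.gaussianReal 0 1 =
      ENNReal.ofReal (1 - exp (-(x ^ 2 / 2))) := by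
  have hint : Integrable (fun y => 1 - cos (x * y)) (ProbabilityTheory.gaussianReal 0 1) :=
    (integrable_const _).sub (integrable_cos_gaussianReal x)
  rw [← ofReal_integral_eq_lintegral_ofReal hint (ae_of_all _ fun _ => sub_nonneg.2 (cos_le_one _)),
    integral_sub (integrable_const _) (integrable_cos_gaussianReal x), integral_cos_gaussianReal,
    integral_const, probReal_univ, one_smul]

theorem lintegral_one_sub_exp_powMeasure {p : ℝ} (hp : 0 < p) :
    ∫⁻ x, ENNReal.ofReal (1 - exp (-(x ^ 2 / 2))) ∂powMeasure p =
      ENNReal.ofReal (gaussAbsMoment p) * cosMoment p := by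
  simp only [← lintegral_one_sub_cos_gaussianReal]
  rw [lintegral_lintegral_swap (by fun_prop)]
  simp only [mul_comm _ (_ : ℝ), lintegral_one_sub_cos_mul hp]
  rw [lintegral_mul_const _ (by fun_prop), lintegral_abs_rpow_gaussianReal hp]

theorem lintegral_one_sub_exp_rpow_powMeasure {p s : ℝ} (hp : 0 < p) (hs : 0 < s) :
    ∫⁻ x, ENNReal.ofReal (1 - exp (-(x ^ 2 / 2)) ^ s) ∂powMeasure p =
      ENNReal.ofReal (s ^ (p / 2)) * (ENNReal.ofReal (gaussAbsMoment p) * cosMoment p) := by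
  have hsqrt : s ^ (p / 2) = √s ^ p := by
    rw [sqrt_eq_rpow, ← rpow_mul hs.le]
    ring_nf
  rw [← lintegral_one_sub_exp_powMeasure hp, hsqrt,
    ← lintegral_powMeasure_comp_mul p (sqrt_pos.2 hs)
      (f := fun x => ENNReal.ofReal (1 - exp (-(x ^ 2 / 2)))) (by fun_prop)]
  refine lintegral_congr fun x => ?_
  rw [← exp_mul, mul_pow, sq_sqrt hs.le]
  ring_nf

theorem lintegral_one_sub_abs_cos_sq {p : ℝ} (hp : 0 < p) :
    ∫⁻ x, ENNReal.ofReal (1 - |cos x| ^ (2 : ℝ)) ∂powMeasure p =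
      ENNReal.ofReal (2 ^ p / 2) * cosMoment p := by
  have hhalf : ∀ x : ℝ, ENNReal.ofReal (1 - |cos x| ^ (2 : ℝ)) =
      ENNReal.ofReal (1 / 2) * ENNReal.ofReal (1 - cos (2 * x)) := fun x => by
    rw [← ENNReal.ofReal_mul (by norm_num), rpow_two, sq_abs, cos_sq]
    ring_nf
  simp only [hhalf]
  rw [lintegral_const_mul _ (by fun_prop), lintegral_one_sub_cos_mul hp, ← mul_assoc,
    ← ENNReal.ofReal_mul (by norm_num), abs_of_pos two_pos]
  ring_nf

theorem le_lintegral_one_sub_abs_cos_rpow {p s : ℝ} (hp : 9 / 5 ≤ p) (hp2 : p < 2) (hs : 2 ≤ s)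
    (hC : gaussAbsMoment p ≤ 2 ^ (p / 2 - 1)) :
    ENNReal.ofReal (s ^ (p / 2)) * (ENNReal.ofReal (gaussAbsMoment p) * cosMoment p) ≤
      ∫⁻ x, ENNReal.ofReal (1 - |cos x| ^ s) ∂powMeasure p := by
  have hp0 : 0 < p := by linarith
  rw [← lintegral_one_sub_exp_rpow_powMeasure hp0 (by linarith)]
  refine lintegral_one_sub_rpow_le (f := fun x => |cos x|) (by fun_prop) (fun _ => abs_nonneg _)
    abs_cos_le_one (by fun_prop) (fun _ => (exp_pos _).le)
    (fun x => exp_le_one_iff.2 (by nlinarith [sq_nonneg x]))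
    (fun t ht t' ht' => powMeasure_le_of_le hp hp2.le ht ht') one_le_two ?_ ?_ hs
  · rw [lintegral_one_sub_abs_cos_sq hp0]
    exact ENNReal.mul_ne_top ENNReal.ofReal_ne_top (cosMoment_ne_top hp0 hp2)
  · rw [lintegral_one_sub_abs_cos_sq hp0, lintegral_one_sub_exp_rpow_powMeasure hp0 two_pos,
      ← mul_assoc, ← ENNReal.ofReal_mul (by positivity)]
    gcongr
    calc (2 : ℝ) ^ (p / 2) * gaussAbsMoment p ≤ 2 ^ (p / 2) * 2 ^ (p / 2 - 1) := by gcongr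
      _ = 2 ^ p / 2 := by rw [← rpow_add two_pos, ← rpow_sub_one two_ne_zero]; ring_nf

/-! ### A two-point inequality -/

theorem continuous_mul_log_div_two {f : ℝ → ℝ} (hf : Continuous f) :
    Continuous fun x => f x * log (f x / 2) := by
  have h : Continuous fun x => 2 * (f x / 2 * log (f x / 2)) :=
    (continuous_mul_log.comp (hf.div_const 2)).const_mul 2
  refine h.congr fun x => ?_
  ring

theorem continuousOn_log_three_sub_sq_div_two :
    ContinuousOn (fun a : ℝ => log ((3 - a ^ 2) / 2)) (Set.Icc 0 1) :=
  ContinuousOn.log (by fun_prop) fun x hx => by nlinarith [hx.1, hx.2]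

section LogDeriv

variable {x : ℝ} (hx : x ∈ Set.Ioo (0 : ℝ) 1)

include hx

theorem hasDerivAt_log_one_add_div_two :
    HasDerivAt (fun x => log ((1 + x) / 2)) (1 + x)⁻¹ x := by
  have h : (1 + x) / 2 ≠ 0 := by linarith [hx.1]
  exact ((((hasDerivAt_id' x).const_add 1).div_const 2).log h).congr_deriv (by field_simp)

theorem hasDerivAt_log_one_sub_div_two :
    HasDerivAt (fun x => log ((1 - x) / 2)) (-(1 - x)⁻¹) x := by
  have h : (1 - x) / 2 ≠ 0 := by linarith [hx.2]
  exact ((((hasDerivAt_id' x).const_sub 1).div_const 2).log h).congr_deriv (by field_simp)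

theorem hasDerivAt_log_three_sub_sq_div_two :
    HasDerivAt (fun x => log ((3 - x ^ 2) / 2)) (-(2 * x) / (3 - x ^ 2)) x := by
  have h : (3 - x ^ 2) / 2 ≠ 0 := by nlinarith [hx.1, hx.2]
  exact ((((hasDerivAt_pow 2 x).const_sub 3).div_const 2).log h).congr_deriv
    (by field_simp; norm_num)

theorem hasDerivAt_mul_log_sub :
    HasDerivAt (fun x => (1 + x) * log ((1 + x) / 2) - (1 - x) * log ((1 - x) / 2) -
        x * log ((3 - x ^ 2) / 2))
      (2 + log ((1 + x) / 2) + log ((1 - x) / 2) - log ((3 - x ^ 2) / 2) +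
        2 * x ^ 2 / (3 - x ^ 2)) x := by
  have h1 : 1 + x ≠ 0 := by linarith [hx.1]
  have h2 : 1 - x ≠ 0 := by linarith [hx.2]
  refine (((((hasDerivAt_id' x).const_add 1).mul (hasDerivAt_log_one_add_div_two hx)).sub
    (((hasDerivAt_id' x).const_sub 1).mul (hasDerivAt_log_one_sub_div_two hx))).sub
    ((hasDerivAt_id' x).mul (hasDerivAt_log_three_sub_sq_div_two hx))).congr_deriv ?_
  field_simp
  ring

theorem hasDerivAt_deriv_mul_log_sub :
    HasDerivAt (fun x => 2 + log ((1 + x) / 2) + log ((1 - x) / 2) - log ((3 - x ^ 2) / 2) +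
        2 * x ^ 2 / (3 - x ^ 2))
      (-(8 * x ^ 3) / ((1 - x ^ 2) * (3 - x ^ 2) ^ 2)) x := by
  have h1 : 1 + x ≠ 0 := by linarith [hx.1]
  have h2 : 1 - x ≠ 0 := by linarith [hx.2]
  have h3 : 3 - x ^ 2 ≠ 0 := by nlinarith [hx.1, hx.2]
  refine (((((hasDerivAt_log_one_add_div_two hx).const_add 2).add
    (hasDerivAt_log_one_sub_div_two hx)).sub (hasDerivAt_log_three_sub_sq_div_two hx)).add
    (((hasDerivAt_pow 2 x).const_mul 2).div ((hasDerivAt_pow 2 x).const_sub 3) h3)).congr_deriv ?_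
  rw [show 1 - x ^ 2 = (1 - x) * (1 + x) by ring]
  field_simp
  push_cast
  ring

theorem hasDerivAt_sq_mul_log_add :
    HasDerivAt (fun x => (1 + x) * ((1 + x) * log ((1 + x) / 2)) +
        (1 - x) * ((1 - x) * log ((1 - x) / 2)) + (3 - x ^ 2) * log ((3 - x ^ 2) / 2))
      (2 * ((1 + x) * log ((1 + x) / 2) - (1 - x) * log ((1 - x) / 2) -
        x * log ((3 - x ^ 2) / 2))) x := by
  have h1 : 1 + x ≠ 0 := by linarith [hx.1]
  have h2 : 1 - x ≠ 0 := by linarith [hx.2]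
  have h3 : 3 - x ^ 2 ≠ 0 := by nlinarith [hx.1, hx.2]
  have hadd := (hasDerivAt_id' x).const_add 1
  have hsub := (hasDerivAt_id' x).const_sub 1
  refine (((hadd.mul (hadd.mul (hasDerivAt_log_one_add_div_two hx))).add
    (hsub.mul (hsub.mul (hasDerivAt_log_one_sub_div_two hx)))).add
    (((hasDerivAt_pow 2 x).const_sub 3).mul (hasDerivAt_log_three_sub_sq_div_two hx))).congr_deriv
      ?_
  simp only [Pi.mul_apply]
  generalize log ((3 - x ^ 2) / 2) = L
  field_simp
  push_cast
  ring

end LogDeriv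

theorem mul_log_sub_nonneg {a : ℝ} (h0 : 0 ≤ a) (h1 : a ≤ 1) :
    0 ≤ (1 + a) * log ((1 + a) / 2) - (1 - a) * log ((1 - a) / 2) -
      a * log ((3 - a ^ 2) / 2) := by
  have hconc : ConcaveOn ℝ (Set.Icc 0 1) fun a : ℝ => (1 + a) * log ((1 + a) / 2) -
      (1 - a) * log ((1 - a) / 2) - a * log ((3 - a ^ 2) / 2) := by
    refine concaveOn_of_hasDerivWithinAt2_nonpos (convex_Icc 0 1)
      (((continuous_mul_log_div_two (by fun_prop)).sub
        (continuous_mul_log_div_two (by fun_prop))).continuousOn.sub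
        (continuousOn_id.mul continuousOn_log_three_sub_sq_div_two))
      (fun x hx => (hasDerivAt_mul_log_sub (interior_Icc.subset hx)).hasDerivWithinAt)
      (fun x hx => (hasDerivAt_deriv_mul_log_sub (interior_Icc.subset hx)).hasDerivWithinAt)
      (fun x hx => ?_)
    have hx := interior_Icc.subset hx
    have hx0 := hx.1.le
    have hsq : 0 ≤ 1 - x ^ 2 := by nlinarith [hx.1, hx.2]
    rw [neg_div]
    exact neg_nonpos.2 (by positivity)
  simpa [show (3 - 1 : ℝ) / 2 = 1 by norm_num] using
    hconc.2 (Set.left_mem_Icc.2 zero_le_one) (Set.right_mem_Icc.2 zero_le_one)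
      (sub_nonneg.2 h1) h0 (sub_add_cancel 1 a)

theorem sq_mul_log_add_nonpos {a : ℝ} (h0 : 0 ≤ a) (h1 : a ≤ 1) :
    (1 + a) * ((1 + a) * log ((1 + a) / 2)) + (1 - a) * ((1 - a) * log ((1 - a) / 2)) +
      (3 - a ^ 2) * log ((3 - a ^ 2) / 2) ≤ 0 := by
  have hmono : MonotoneOn (fun a : ℝ => (1 + a) * ((1 + a) * log ((1 + a) / 2)) +
      (1 - a) * ((1 - a) * log ((1 - a) / 2)) + (3 - a ^ 2) * log ((3 - a ^ 2) / 2))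
      (Set.Icc 0 1) := by
    refine monotoneOn_of_hasDerivWithinAt_nonneg (convex_Icc 0 1) ?_
      (fun x hx => (hasDerivAt_sq_mul_log_add (interior_Icc.subset hx)).hasDerivWithinAt)
      (fun x hx => mul_nonneg two_pos.le
        (mul_log_sub_nonneg (interior_subset hx).1 (interior_subset hx).2))
    have hadd := continuous_mul_log_div_two (f := fun a => 1 + a) (by fun_prop)
    have hsub := continuous_mul_log_div_two (f := fun a => 1 - a) (by fun_prop)
    have hlog := continuousOn_log_three_sub_sq_div_two
    fun_prop
  have h := hmono ⟨h0, h1⟩ (Set.right_mem_Icc.2 zero_le_one) h1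
  norm_num at h
  exact h

theorem sq_mul_one_sub_mul_log_le_rpow {p x : ℝ} (hp : p ≠ 0) (hx : 0 ≤ x) :
    x ^ 2 * (1 - (2 - p) * log x) ≤ x ^ p := by
  rcases hx.eq_or_lt with rfl | hx
  · simp [zero_rpow hp]
  · calc x ^ 2 * (1 - (2 - p) * log x) ≤ x ^ 2 * exp (log x * (p - 2)) := by
          gcongr
          linarith [add_one_le_exp (log x * (p - 2))]
      _ = x ^ p := by
          rw [← rpow_def_of_pos hx, ← rpow_two, ← rpow_add hx, add_sub_cancel]

theorem two_le_rpow_add_rpow_add_rpow {a p : ℝ} (h0 : 0 ≤ a) (h1 : a ≤ 1) (hp : p ≠ 0)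
    (hp2 : p ≤ 2) :
    2 ≤ ((1 + a) / 2) ^ p + ((1 - a) / 2) ^ p + ((3 - a ^ 2) / 2) ^ (p / 2) := by
  have hpos : 0 < (3 - a ^ 2) / 2 := by nlinarith
  have hadd := sq_mul_one_sub_mul_log_le_rpow hp (x := (1 + a) / 2) (by linarith)
  have hsub := sq_mul_one_sub_mul_log_le_rpow hp (x := (1 - a) / 2) (by linarith)
  have hsqrt := sq_mul_one_sub_mul_log_le_rpow hp (sqrt_nonneg ((3 - a ^ 2) / 2))
  rw [sq_sqrt hpos.le, log_sqrt hpos.le, sqrt_eq_rpow, ← rpow_mul hpos.le, one_div_mul_eq_div]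
    at hsqrt
  have hlog := mul_nonneg (sub_nonneg.2 hp2) (neg_nonneg.2 (sq_mul_log_add_nonpos h0 h1))
  linarith

/-! ### Moments of sign sums -/

/-- The sum of the squares of the entries of a list. -/
noncomputable def sqSum (l : List ℝ) : ℝ := (l.map fun a => a ^ 2).sum

@[simp] theorem sqSum_nil : sqSum [] = 0 := by simp [sqSum]

@[simp] theorem sqSum_cons (a : ℝ) (l : List ℝ) : sqSum (a :: l) = a ^ 2 + sqSum l := by
  simp [sqSum]

theorem sqSum_nonneg (l : List ℝ) : 0 ≤ sqSum l :=
  List.sum_nonneg (by simp only [List.mem_map]; rintro _ ⟨a, -, rfl⟩; positivity)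

theorem sqSum_map_mul (c : ℝ) (l : List ℝ) : sqSum (l.map (c * ·)) = c ^ 2 * sqSum l := by
  induction l with
  | nil => simp
  | cons a l ih => rw [List.map_cons, sqSum_cons, sqSum_cons, ih]; ring

theorem sqSum_perm {l l' : List ℝ} (h : l.Perm l') : sqSum l = sqSum l' :=
  (h.map _).sum_eq

/-- The average of `φ (x + ∑ ± a)` over all choices of signs, where `a` runs through a list. -/
noncomputable def signAverage (φ : ℝ → ℝ) : List ℝ → ℝ → ℝ
  | [], x => φ x
  | a :: l, x => (signAverage φ l (x + a) + signAverage φ l (x - a)) / 2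

theorem signAverage_perm (φ : ℝ → ℝ) {l l' : List ℝ} (h : l.Perm l') (x : ℝ) :
    signAverage φ l x = signAverage φ l' x := by
  induction h generalizing x with
  | nil => rfl
  | cons a _ ih => simp only [signAverage, ih]
  | swap a b l =>
    simp only [signAverage]
    rw [add_right_comm x b a, add_sub_right_comm x b a, sub_add_eq_add_sub x b a,
      sub_right_comm x b a, sub_add_eq_add_sub x a b]
    ring
  | trans _ _ ih₁ ih₂ => exact (ih₁ x).trans (ih₂ x)

theorem signAverage_neg {φ : ℝ → ℝ} (hφ : ∀ x, φ (-x) = φ x) (l : List ℝ) (x : ℝ) :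
    signAverage φ l (-x) = signAverage φ l x := by
  induction l generalizing x with
  | nil => exact hφ x
  | cons a l ih =>
    simp only [signAverage]
    rw [← ih (x + a), ← ih (x - a), neg_add, neg_sub', sub_neg_eq_add, ← sub_eq_add_neg]
    ring

theorem signAverage_cons_zero {φ : ℝ → ℝ} (hφ : ∀ x, φ (-x) = φ x) (l : List ℝ) (x : ℝ) :
    signAverage φ (x :: l) 0 = signAverage φ l x := by
  simp only [signAverage]
  rw [zero_add, zero_sub, signAverage_neg hφ, add_self_div_two]

theorem signAverage_nonneg {φ : ℝ → ℝ} (hφ : ∀ x, 0 ≤ φ x) (l : List ℝ) (x : ℝ) :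
    0 ≤ signAverage φ l x := by
  induction l generalizing x with
  | nil => exact hφ x
  | cons a l ih => exact div_nonneg (add_nonneg (ih _) (ih _)) two_pos.le

theorem signAverage_abs_rpow_map_mul (p c : ℝ) (l : List ℝ) (x : ℝ) :
    signAverage (fun y => |y| ^ p) (l.map (c * ·)) (c * x) =
      |c| ^ p * signAverage (fun y => |y| ^ p) l x := by
  induction l generalizing x with
  | nil =>
    simp only [signAverage, List.map_nil]
    rw [abs_mul, mul_rpow (abs_nonneg _) (abs_nonneg _)]
  | cons a l ih =>
    simp only [signAverage, List.map_cons]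
    rw [← mul_add, ← mul_sub, ih, ih]
    ring

/-- The `p`-th absolute moment of the random sum `∑ ± a` with independent uniform signs, where
`a` runs through a list. -/
noncomputable def signMoment (p : ℝ) (l : List ℝ) : ℝ := signAverage (fun y => |y| ^ p) l 0

theorem signMoment_nonneg (p : ℝ) (l : List ℝ) : 0 ≤ signMoment p l :=
  signAverage_nonneg (fun _ => by positivity) l 0

theorem signMoment_perm (p : ℝ) {l l' : List ℝ} (h : l.Perm l') :
    signMoment p l = signMoment p l' :=
  signAverage_perm _ h 0

theorem signMoment_map_mul (p c : ℝ) (l : List ℝ) :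
    signMoment p (l.map (c * ·)) = |c| ^ p * signMoment p l := by
  simpa only [signMoment, mul_zero] using signAverage_abs_rpow_map_mul p c l 0

theorem signMoment_cons (p a : ℝ) (l : List ℝ) :
    signMoment p (a :: l) = signAverage (fun y => |y| ^ p) l a :=
  signAverage_cons_zero (fun x => by simp only [abs_neg]) l a

theorem signMoment_singleton (p a : ℝ) : signMoment p [a] = |a| ^ p := by
  rw [signMoment_cons, signAverage]

theorem signMoment_cons_cons (p a b : ℝ) (l : List ℝ) :
    signMoment p (a :: b :: l) =
      (signMoment p ((a + b) :: l) + signMoment p ((a - b) :: l)) / 2 := by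
  simp only [signMoment_cons, signAverage]

theorem signMoment_cons_cons_cons (p c a b : ℝ) (l : List ℝ) :
    signMoment p (c :: a :: b :: l) =
      (signMoment p (c :: (a + b) :: l) + signMoment p (c :: (a - b) :: l)) / 2 := by
  have hperm : (c :: a :: b :: l).Perm (a :: b :: c :: l) :=
    (List.Perm.swap a c _).trans ((List.Perm.swap b c l).cons a)
  rw [signMoment_perm p hperm, signMoment_cons_cons, signMoment_perm p (List.Perm.swap c (a + b) l),
    signMoment_perm p (List.Perm.swap c (a - b) l)]

theorem abs_prod_cos_le_one (l : List ℝ) (x : ℝ) :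
    |(l.map fun a => cos (a * x)).prod| ≤ 1 := by
  induction l with
  | nil => simp
  | cons a l ih =>
    rw [List.map_cons, List.prod_cons, abs_mul]
    exact mul_le_one₀ (abs_cos_le_one _) (abs_nonneg _) ih

theorem measurable_prod_cos (l : List ℝ) :
    Measurable fun x => (l.map fun a => cos (a * x)).prod := by
  induction l with
  | nil => simp
  | cons a l ih => simp only [List.map_cons, List.prod_cons]; fun_prop

theorem prod_cos_cons_cons (a b x : ℝ) (l : List ℝ) :
    ((a :: b :: l).map fun a => cos (a * x)).prod =
      ((((a + b) :: l).map fun a => cos (a * x)).prod +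
        (((a - b) :: l).map fun a => cos (a * x)).prod) / 2 := by
  simp only [List.map_cons, List.prod_cons, add_mul, sub_mul, cos_add, cos_sub]
  ring

theorem lintegral_one_sub_prod_cos {p : ℝ} (hp : 0 < p) : ∀ l : List ℝ,
    ∫⁻ x, ENNReal.ofReal (1 - (l.map fun a => cos (a * x)).prod) ∂powMeasure p =
      ENNReal.ofReal (signMoment p l) * cosMoment p
  | [] => by simp [signMoment, signAverage, zero_rpow hp.ne']
  | [a] => by simpa [signMoment_singleton] using lintegral_one_sub_cos_mul hp a
  | a :: b :: l => by
    have hnonneg : ∀ (l : List ℝ) (x : ℝ), 0 ≤ 1 - (l.map fun a => cos (a * x)).prod :=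
      fun l x => sub_nonneg.2 ((le_abs_self _).trans (abs_prod_cos_le_one l x))
    have hsplit : ∀ x, ENNReal.ofReal (1 - ((a :: b :: l).map fun a => cos (a * x)).prod) =
        ENNReal.ofReal (1 / 2) *
          (ENNReal.ofReal (1 - (((a + b) :: l).map fun a => cos (a * x)).prod) +
            ENNReal.ofReal (1 - (((a - b) :: l).map fun a => cos (a * x)).prod)) := fun x => by
      rw [← ENNReal.ofReal_add (hnonneg _ _) (hnonneg _ _), ← ENNReal.ofReal_mul (by norm_num),
        prod_cos_cons_cons]
      congr 1
      ring
    have hmeas : ∀ l : List ℝ,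
        Measurable fun x => ENNReal.ofReal (1 - (l.map fun a => cos (a * x)).prod) :=
      fun l => ((measurable_prod_cos l).const_sub 1).ennreal_ofReal
    rw [lintegral_congr hsplit, lintegral_const_mul _ (by exact (hmeas _).add (hmeas _)),
      lintegral_add_left (hmeas _), lintegral_one_sub_prod_cos hp, lintegral_one_sub_prod_cos hp,
      ← add_mul, ← ENNReal.ofReal_add (signMoment_nonneg _ _) (signMoment_nonneg _ _), ← mul_assoc,
      ← ENNReal.ofReal_mul (by norm_num), signMoment_cons_cons]
    ring_nf
termination_by l => l.length

theorem sum_mul_one_sub_abs_rpow_le_one_sub_prod {ι : Type*} [Fintype ι] {w c : ι → ℝ}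
    (hw : ∀ i, 0 ≤ w i) (hsum : ∑ i, w i = 1) (hc : ∀ i, |c i| ≤ 1) :
    ∑ i, w i * (1 - |c i| ^ (w i)⁻¹) ≤ 1 - ∏ i, c i := by
  have hamgm := geom_mean_le_arith_mean_weighted Finset.univ w (fun i => |c i| ^ (w i)⁻¹)
    (fun i _ => hw i) hsum (fun i _ => by positivity)
  have hprod : |∏ i, c i| ≤ ∏ i, (|c i| ^ (w i)⁻¹) ^ w i := by
    rw [Finset.abs_prod]
    refine Finset.prod_le_prod (fun i _ => abs_nonneg _) fun i _ => ?_
    rcases eq_or_ne (w i) 0 with h | h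
    · simpa [h] using hc i
    · rw [rpow_inv_rpow (abs_nonneg _) h]
  simp only [mul_sub, mul_one, Finset.sum_sub_distrib, hsum]
  linarith [le_abs_self (∏ i, c i)]

theorem sum_ofReal_mul_ofReal_one_sub_abs_rpow_le {ι : Type*} [Fintype ι] {w c : ι → ℝ}
    (hw : ∀ i, 0 ≤ w i) (hsum : ∑ i, w i = 1) (hc : ∀ i, |c i| ≤ 1) :
    ∑ i, ENNReal.ofReal (w i) * ENNReal.ofReal (1 - |c i| ^ (w i)⁻¹) ≤
      ENNReal.ofReal (1 - ∏ i, c i) := by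
  have hnonneg : ∀ i, 0 ≤ 1 - |c i| ^ (w i)⁻¹ := fun i =>
    sub_nonneg.2 (rpow_le_one (abs_nonneg _) (hc i) (inv_nonneg.2 (hw i)))
  simp only [← ENNReal.ofReal_mul (hw _)]
  rw [← ENNReal.ofReal_sum_of_nonneg fun i _ => mul_nonneg (hw i) (hnonneg i)]
  exact ENNReal.ofReal_le_ofReal (sum_mul_one_sub_abs_rpow_le_one_sub_prod hw hsum hc)

theorem abs_rpow_eq_sq_rpow (a p : ℝ) : |a| ^ p = (a ^ 2) ^ (p / 2) := by
  rw [← sq_abs, ← rpow_natCast, ← rpow_mul (abs_nonneg _)]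
  congr 1
  push_cast
  ring

/-! ### The sharp lower bound for sign moments -/

/-- The function `(1 + x) ^ q`, with its graph on `(-∞, 1]` replaced by the point reflection through
`(1, 2 ^ q)` of its graph on `[1, ∞)`. It dominates `(1 + x) ^ q`, and it satisfies the midpoint
inequality needed to merge two coefficients. -/
noncomputable def reflectedRpow (q x : ℝ) : ℝ :=
  if x ≤ 1 then 2 * 2 ^ q - (3 - x) ^ q else (1 + x) ^ q

section ReflectedRpow

variable {q : ℝ} (hq : 0 ≤ q) (hq1 : q ≤ 1)
include hq hq1

theorem rpow_add_rpow_le_rpow_add_rpow {a b c d : ℝ} (hd : 0 ≤ d) (hdb : d ≤ b) (hdc : d ≤ c)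
    (hba : b ≤ a) (hca : c ≤ a) (hsum : a + d ≤ b + c) : a ^ q + d ^ q ≤ b ^ q + c ^ q :=
  add_le_add_of_concaveOn_of_monotoneOn (concaveOn_rpow hq hq1)
    (fun _ hx _ _ hxy => rpow_le_rpow hx hxy hq) (hd.trans (hdb.trans hba)) hd hdb hdc hba hca hsum

theorem rpow_one_add_le_reflectedRpow {x : ℝ} (hx : 0 ≤ x) : (1 + x) ^ q ≤ reflectedRpow q x := by
  rw [reflectedRpow]
  split_ifs with h
  · have := rpow_add_rpow_le_rpow_add_rpow hq hq1 (a := 3 - x) (b := 2) (c := 2) (d := 1 + x)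
      (by linarith) (by linarith) (by linarith) (by linarith) (by linarith) (by linarith)
    linarith
  · exact le_rfl

theorem two_mul_reflectedRpow_le {u v : ℝ} (hu : 0 ≤ u) (hv : 0 ≤ v) (huv : u + v ≤ 2) :
    2 * reflectedRpow q ((u + v) / 2) ≤ reflectedRpow q u + reflectedRpow q v := by
  wlog hle : v ≤ u generalizing u v
  · rw [add_comm u v, add_comm (reflectedRpow q u)]
    exact this hv hu (by linarith) (by linarith)
  simp only [reflectedRpow]
  rw [if_pos (by linarith : (u + v) / 2 ≤ 1), if_pos (by linarith : v ≤ 1)]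
  split_ifs with h
  · have := rpow_add_rpow_le_rpow_add_rpow hq hq1 (a := 3 - v) (b := 3 - (u + v) / 2)
      (c := 3 - (u + v) / 2) (d := 3 - u) (by linarith) (by linarith) (by linarith) (by linarith)
      (by linarith) (by linarith)
    linarith
  · have h1 := rpow_add_rpow_le_rpow_add_rpow hq hq1 (a := 3 - v) (b := 3 - (u + v) / 2)
      (c := 2 + (u - v) / 2) (d := 2) (by linarith) (by linarith) (by linarith) (by linarith)
      (by linarith) (by linarith)
    have h2 := rpow_add_rpow_le_rpow_add_rpow hq hq1 (a := 2 + (u - v) / 2) (b := 3 - (u + v) / 2)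
      (c := 1 + u) (d := 2) (by linarith) (by linarith) (by linarith) (by linarith) (by linarith)
      (by linarith)
    linarith

end ReflectedRpow

theorem mul_two_mul_two_rpow_sub_le {p C a : ℝ} (hp : 0 < p) (hp2 : p ≤ 2)
    (hC : C ≤ 2 ^ (p / 2 - 1)) (ha : |a| ≤ 1) :
    C * (2 * 2 ^ (p / 2) - (3 - a ^ 2) ^ (p / 2)) ≤ (|1 + a| ^ p + |1 - a| ^ p) / 2 := by
  wlog ha0 : 0 ≤ a generalizing a
  · have := this (a := -a) (by rwa [abs_neg]) (by linarith)
    rwa [neg_sq, sub_neg_eq_add, ← sub_eq_add_neg, add_comm (|1 - a| ^ p)] at this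
  rw [abs_of_nonneg ha0] at ha
  have ha3 : 0 ≤ 3 - a ^ 2 := by nlinarith
  have hreflected : 0 ≤ 2 * 2 ^ (p / 2) - (3 - a ^ 2) ^ (p / 2) := by
    have := rpow_one_add_le_reflectedRpow (q := p / 2) (by linarith) (by linarith) (sq_nonneg a)
    rw [reflectedRpow, if_pos (by nlinarith)] at this
    exact le_trans (by positivity) this
  have htwo := two_le_rpow_add_rpow_add_rpow ha0 ha hp.ne' hp2
  have hsplit : (2 : ℝ) ^ p = 2 ^ (p / 2) * 2 ^ (p / 2) := by
    rw [← rpow_add two_pos, add_halves]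
  rw [div_rpow (by linarith) two_pos.le, div_rpow (by linarith) two_pos.le,
    div_rpow ha3 two_pos.le, ← add_div] at htwo
  rw [abs_of_nonneg (by linarith : 0 ≤ 1 + a), abs_of_nonneg (by linarith : 0 ≤ 1 - a)]
  calc C * (2 * 2 ^ (p / 2) - (3 - a ^ 2) ^ (p / 2))
      ≤ 2 ^ (p / 2 - 1) * (2 * 2 ^ (p / 2) - (3 - a ^ 2) ^ (p / 2)) := by gcongr
    _ = 2 ^ p / 2 * (2 - (3 - a ^ 2) ^ (p / 2) / 2 ^ (p / 2)) := by
      rw [hsplit, rpow_sub_one two_ne_zero]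
      field_simp
    _ ≤ 2 ^ p / 2 * (((1 + a) ^ p + (1 - a) ^ p) / 2 ^ p) := by
      gcongr
      linarith
    _ = ((1 + a) ^ p + (1 - a) ^ p) / 2 := by field_simp

section GaussianConstant

variable {p : ℝ} (hp : 9 / 5 ≤ p) (hp2 : p < 2) (hC : gaussAbsMoment p ≤ 2 ^ (p / 2 - 1))
include hp hp2 hC

theorem le_lintegral_one_sub_abs_cos_mul_rpow {a S : ℝ} (ha : a ≠ 0) (haS : 2 * a ^ 2 ≤ S) :
    ENNReal.ofReal (S ^ (p / 2)) * (ENNReal.ofReal (gaussAbsMoment p) * cosMoment p) ≤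
      ∫⁻ x, ENNReal.ofReal (1 - |cos (a * x)| ^ (S / a ^ 2)) ∂powMeasure p := by
  have ha' : 0 < |a| := abs_pos.2 ha
  have hscale : ∫⁻ x, ENNReal.ofReal (1 - |cos (a * x)| ^ (S / a ^ 2)) ∂powMeasure p =
      ENNReal.ofReal (|a| ^ p) *
        ∫⁻ x, ENNReal.ofReal (1 - |cos x| ^ (S / a ^ 2)) ∂powMeasure p := by
    rw [← lintegral_powMeasure_comp_mul p ha' (by fun_prop)]
    refine lintegral_congr fun x => ?_
    rcases abs_choice a with h | h <;> simp only [h, neg_mul, cos_neg]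
  have hS : S ^ (p / 2) = |a| ^ p * (S / a ^ 2) ^ (p / 2) := by
    rw [abs_rpow_eq_sq_rpow, ← mul_rpow (sq_nonneg a) (div_nonneg (by nlinarith) (sq_nonneg a)),
      mul_div_cancel₀ _ (pow_ne_zero 2 ha)]
  rw [hscale, hS, ENNReal.ofReal_mul (by positivity), mul_assoc]
  gcongr
  exact le_lintegral_one_sub_abs_cos_rpow hp hp2 ((le_div_iff₀ (by positivity)).2 haS) hC

theorem gaussAbsMoment_mul_sqSum_rpow_le_of_sq_le {l : List ℝ} (hl : 0 < sqSum l)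
    (hsmall : ∀ a ∈ l, 2 * a ^ 2 ≤ sqSum l) :
    gaussAbsMoment p * sqSum l ^ (p / 2) ≤ signMoment p l := by
  have hp0 : 0 < p := by linarith
  set S := sqSum l
  set G := ENNReal.ofReal (S ^ (p / 2)) * (ENNReal.ofReal (gaussAbsMoment p) * cosMoment p) with hG
  let c : Fin l.length → ℝ → ℝ := fun i x => cos (l[(i : ℕ)] * x)
  let w : Fin l.length → ℝ := fun i => l[(i : ℕ)] ^ 2 / S
  have hw : ∀ i, 0 ≤ w i := fun i => by positivity
  have hsum : ∑ i, w i = 1 := by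
    rw [← Finset.sum_div, Fin.sum_univ_fun_getElem l fun a => a ^ 2, div_eq_one_iff_eq hl.ne']
    rfl
  have hpointwise : ∀ x, ∑ i, ENNReal.ofReal (w i) * ENNReal.ofReal (1 - |c i x| ^ (w i)⁻¹) ≤
      ENNReal.ofReal (1 - (l.map fun a => cos (a * x)).prod) := fun x => by
    rw [← Fin.prod_univ_fun_getElem l fun a => cos (a * x)]
    exact sum_ofReal_mul_ofReal_one_sub_abs_rpow_le hw hsum fun i => abs_cos_le_one _
  have hfrequency : ∀ i, ENNReal.ofReal (w i) * G ≤
      ENNReal.ofReal (w i) * ∫⁻ x, ENNReal.ofReal (1 - |c i x| ^ (w i)⁻¹) ∂powMeasure p := by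
    intro i
    rcases eq_or_ne l[(i : ℕ)] 0 with h | h
    · simp [w, h]
    · gcongr
      rw [inv_div]
      exact le_lintegral_one_sub_abs_cos_mul_rpow hp hp2 hC h (hsmall _ (List.getElem_mem _))
  have htotal : G ≤ ENNReal.ofReal (signMoment p l) * cosMoment p := calc
    G = ∑ i, ENNReal.ofReal (w i) * G := by
      rw [← Finset.sum_mul, ← ENNReal.ofReal_sum_of_nonneg fun i _ => hw i, hsum,
        ENNReal.ofReal_one, one_mul]
    _ ≤ ∑ i, ENNReal.ofReal (w i) * ∫⁻ x, ENNReal.ofReal (1 - |c i x| ^ (w i)⁻¹) ∂powMeasure p :=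
      Finset.sum_le_sum fun i _ => hfrequency i
    _ = ∫⁻ x, ∑ i, ENNReal.ofReal (w i) * ENNReal.ofReal (1 - |c i x| ^ (w i)⁻¹) ∂powMeasure p := by
      rw [lintegral_finsetSum _ fun i _ => by fun_prop]
      exact Finset.sum_congr rfl fun i _ => (lintegral_const_mul _ (by fun_prop)).symm
    _ ≤ _ := (lintegral_mono hpointwise).trans_eq (lintegral_one_sub_prod_cos hp0 l)
  rwa [hG, ← mul_assoc,
    ENNReal.mul_le_mul_iff_left (cosMoment_ne_zero p) (cosMoment_ne_top hp0 hp2),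
    ← ENNReal.ofReal_mul (by positivity),
    ENNReal.ofReal_le_ofReal_iff (signMoment_nonneg p l), mul_comm] at htotal

/- If one coefficient `a` carries more than half of the square sum, divide by it: what remains is a
sign sum `1 + ∑ ± b` with `∑ b ^ 2 ≤ 1`. -/
theorem gaussAbsMoment_mul_sqSum_rpow_le_of_cons_one {l : List ℝ}
    (h : ∀ l' : List ℝ, l'.length < l.length → sqSum l' ≤ 1 →
      gaussAbsMoment p * reflectedRpow (p / 2) (sqSum l') ≤ signMoment p (1 :: l')) :
    gaussAbsMoment p * sqSum l ^ (p / 2) ≤ signMoment p l := by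
  by_cases hlarge : ∃ a ∈ l, sqSum l < 2 * a ^ 2
  · obtain ⟨a, ha, hlarge⟩ := hlarge
    have hperm := List.perm_cons_erase ha
    set l' := l.erase a
    have hsq : sqSum l = a ^ 2 + sqSum l' := by rw [sqSum_perm hperm, sqSum_cons]
    have hl' := sqSum_nonneg l'
    have ha2 : 0 < a ^ 2 := by linarith
    have ha0 : a ≠ 0 := sq_pos_iff.1 ha2
    have hsq' : sqSum (l'.map (a⁻¹ * ·)) = sqSum l' / a ^ 2 := by
      rw [sqSum_map_mul, inv_pow, inv_mul_eq_div]
    have hbound := h (l'.map (a⁻¹ * ·)) (by simp [hperm.length_eq])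
      (by rw [hsq', div_le_one ha2]; linarith)
    have hmoment : signMoment p l = |a| ^ p * signMoment p (1 :: l'.map (a⁻¹ * ·)) := by
      rw [← signMoment_map_mul, signMoment_perm p hperm]
      simp [Function.comp_def, ha0]
    have hsqSum : sqSum l ^ (p / 2) = |a| ^ p * (1 + sqSum l' / a ^ 2) ^ (p / 2) := by
      rw [abs_rpow_eq_sq_rpow, ← mul_rpow ha2.le (by positivity), hsq]
      congr 1
      field_simp
    rw [hsqSum, hmoment, mul_left_comm]
    refine mul_le_mul_of_nonneg_left (le_trans ?_ hbound) (by positivity)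
    rw [hsq']
    exact mul_le_mul_of_nonneg_left
      (rpow_one_add_le_reflectedRpow (by linarith) (by linarith) (by positivity))
      (gaussAbsMoment_pos (by linarith)).le
  · push Not at hlarge
    rcases (sqSum_nonneg l).eq_or_lt with h0 | h0
    · rw [← h0, zero_rpow (by linarith), mul_zero]
      exact signMoment_nonneg p l
    · exact gaussAbsMoment_mul_sqSum_rpow_le_of_sq_le hp hp2 hC h0 hlarge

omit hp in
theorem gaussAbsMoment_mul_reflectedRpow_le_of_sqSum_le_one (hp0 : 0 < p) : ∀ l : List ℝ,
    sqSum l ≤ 1 →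
    (∀ l' : List ℝ, l'.length < l.length →
      gaussAbsMoment p * reflectedRpow (p / 2) (sqSum l') ≤ signMoment p (1 :: l')) →
    gaussAbsMoment p * reflectedRpow (p / 2) (sqSum l) ≤ signMoment p (1 :: l)
  | [], _, _ => by
    have := mul_two_mul_two_rpow_sub_le hp0 hp2.le hC (a := 0) (by simp)
    norm_num at this
    norm_num [reflectedRpow, signMoment_singleton]
    linarith
  | [a], hl, _ => by
    rw [sqSum_cons, sqSum_nil, add_zero] at hl ⊢
    rw [reflectedRpow, if_pos hl, signMoment_cons_cons, signMoment_singleton, signMoment_singleton]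
    exact mul_two_mul_two_rpow_sub_le hp0 hp2.le hC ((sq_le_one_iff_abs_le_one a).1 hl)
  | a :: b :: l, hl, ih => by
    have hplus := ih ((a + b) :: l) (by simp)
    have hminus := ih ((a - b) :: l) (by simp)
    have hnonneg := sqSum_nonneg l
    simp only [sqSum_cons] at hplus hminus hl ⊢
    have hmid := two_mul_reflectedRpow_le (q := p / 2) (u := (a + b) ^ 2 + sqSum l)
      (v := (a - b) ^ 2 + sqSum l) (by linarith) (by linarith) (by positivity) (by positivity)
      (by linarith)
    rw [show ((a + b) ^ 2 + sqSum l + ((a - b) ^ 2 + sqSum l)) / 2 =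
      a ^ 2 + (b ^ 2 + sqSum l) by ring] at hmid
    have := mul_le_mul_of_nonneg_left hmid (gaussAbsMoment_pos (p := p) (by linarith)).le
    rw [signMoment_cons_cons_cons]
    linarith

theorem gaussAbsMoment_mul_reflectedRpow_le (l : List ℝ) :
    gaussAbsMoment p * reflectedRpow (p / 2) (sqSum l) ≤ signMoment p (1 :: l) := by
  have hp0 : 0 < p := by linarith
  induction hn : l.length using Nat.strong_induction_on generalizing l with
  | _ n ih =>
    subst hn
    have hle_one : ∀ l' : List ℝ, l'.length ≤ l.length → sqSum l' ≤ 1 →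
        gaussAbsMoment p * reflectedRpow (p / 2) (sqSum l') ≤ signMoment p (1 :: l') :=
      fun l' hlen hl' => gaussAbsMoment_mul_reflectedRpow_le_of_sqSum_le_one hp2 hC hp0 l' hl'
        fun l'' hlen' => ih _ (hlen'.trans_le hlen) l'' rfl
    rcases le_or_gt (sqSum l) 1 with hl | hl
    · exact hle_one l le_rfl hl
    · have := gaussAbsMoment_mul_sqSum_rpow_le_of_cons_one hp hp2 hC (l := 1 :: l)
        fun l' hlen => hle_one l' (Nat.lt_succ_iff.1 hlen)
      rw [sqSum_cons, one_pow] at this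
      rwa [reflectedRpow, if_neg hl.not_ge]

theorem gaussAbsMoment_mul_sqSum_rpow_le_signMoment (l : List ℝ) :
    gaussAbsMoment p * sqSum l ^ (p / 2) ≤ signMoment p l :=
  gaussAbsMoment_mul_sqSum_rpow_le_of_cons_one hp hp2 hC fun l' _ _ =>
    gaussAbsMoment_mul_reflectedRpow_le hp hp2 hC l'

end GaussianConstant

/-! ### The critical exponent -/

theorem Gamma_add_natCast {s : ℝ} (hs : 0 < s) (n : ℕ) :
    Gamma (s + n) = Gamma s * ∏ k ∈ Finset.range n, (s + k) := by
  induction n with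
  | zero => simp
  | succ n ih =>
    rw [Nat.cast_succ, ← add_assoc, Gamma_add_one (by positivity), ih, Finset.prod_range_succ]
    ring

theorem Gamma_three_halves : Gamma (3 / 2) = √π / 2 := by
  rw [show (3 / 2 : ℝ) = 1 / 2 + 1 by norm_num, Gamma_add_one (by norm_num), Gamma_one_half_eq]
  ring

theorem Gamma_pow_add_le {m n : ℕ} (hm : 0 < m) (hn : 0 < n) {s t : ℝ} (hs : 0 < s) (ht : 0 < t) :
    Gamma ((m * s + n * t) / (m + n)) ^ (m + n) ≤ Gamma s ^ m * Gamma t ^ n := by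
  have hmn : (0 : ℝ) < m + n := by positivity
  have hlog := Gamma_mul_add_mul_le_rpow_Gamma_mul_rpow_Gamma hs ht
    (a := m / (m + n)) (b := n / (m + n)) (by positivity) (by positivity) (by field_simp)
  have hGs := Gamma_pos_of_pos hs
  have hGt := Gamma_pos_of_pos ht
  have hpow := pow_le_pow_left₀ (Gamma_pos_of_pos (by positivity)).le hlog (m + n)
  rw [mul_pow, ← rpow_mul_natCast hGs.le, ← rpow_mul_natCast hGt.le, Nat.cast_add,
    div_mul_cancel₀ _ hmn.ne', div_mul_cancel₀ _ hmn.ne', rpow_natCast, rpow_natCast] at hpow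
  rwa [add_div, mul_div_right_comm, mul_div_right_comm]

theorem prod_pow_five_mul_factorial_lt :
    (∏ k ∈ Finset.range 28, (7 / 5 + (k : ℝ))) ^ 5 * (Nat.factorial 29 : ℝ) <
      1772453 / 2000000 * (∏ k ∈ Finset.range 28, (3 / 2 + (k : ℝ))) ^ 6 := by
  simp only [Finset.prod_range_succ, Finset.prod_range_zero, Nat.factorial]
  norm_num

theorem lt_sqrt_pi_div_two : (1772453 / 2000000 : ℝ) < √π / 2 := by
  have : (1772453 / 1000000 : ℝ) < √π := lt_sqrt_of_sq_lt (by nlinarith [pi_gt_d6])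
  linarith

/- Log-convexity of `Gamma` is too lossy near `7 / 5` itself. After a shift by `28` it compares the
values at `29.4`, `29.5` and `30`, where it is nearly sharp. -/
theorem sqrt_pi_div_two_lt_Gamma : √π / 2 < Gamma (7 / 5) := by
  by_contra! hle
  have hGamma := Gamma_pos_of_pos (show (0 : ℝ) < 7 / 5 by norm_num)
  have hconvex := Gamma_pow_add_le (m := 5) (n := 1) (by norm_num) (by norm_num)
    (s := 7 / 5 + (28 : ℕ)) (t := (29 : ℕ) + 1) (by norm_num) (by norm_num)
  rw [show (((5 : ℕ) : ℝ) * (7 / 5 + (28 : ℕ)) + (1 : ℕ) * ((29 : ℕ) + 1)) / ((5 : ℕ) + (1 : ℕ)) =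
    3 / 2 + (28 : ℕ) by norm_num, Gamma_nat_eq_factorial, pow_one,
    Gamma_add_natCast (by norm_num), Gamma_add_natCast (by norm_num), Gamma_three_halves] at hconvex
  have hnumeric := prod_pow_five_mul_factorial_lt
  set A : ℝ := ∏ k ∈ Finset.range 28, (3 / 2 + (k : ℝ))
  set B : ℝ := ∏ k ∈ Finset.range 28, (7 / 5 + (k : ℝ))
  have hA : 0 < A := Finset.prod_pos fun k _ => by positivity
  have hB : 0 < B := Finset.prod_pos fun k _ => by positivity
  have hsqrt : 0 < √π / 2 := by positivity
  have hupper : √π / 2 * A ^ 6 ≤ B ^ 5 * (Nat.factorial 29 : ℝ) := by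
    refine le_of_mul_le_mul_left ?_ (pow_pos hsqrt 5)
    calc (√π / 2) ^ 5 * (√π / 2 * A ^ 6) = (√π / 2 * A) ^ 6 := by ring
      _ ≤ (Gamma (7 / 5) * B) ^ 5 * (Nat.factorial 29 : ℝ) := hconvex
      _ ≤ (√π / 2 * B) ^ 5 * (Nat.factorial 29 : ℝ) := by gcongr
      _ = (√π / 2) ^ 5 * (B ^ 5 * (Nat.factorial 29 : ℝ)) := by ring
  have hlower := mul_lt_mul_of_pos_right lt_sqrt_pi_div_two (pow_pos hA 6)
  linarith

theorem eulerMascheroniConstant_add_two_mul_log_two_lt_two :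
    eulerMascheroniConstant + 2 * log 2 < 2 := by
  have hseq : eulerMascheroniSeq' 16 = 2436559 / 720720 - 4 * log 2 := by
    rw [eulerMascheroniSeq', if_neg (by norm_num), show ((16 : ℕ) : ℝ) = 2 ^ 4 by norm_num, log_pow]
    norm_num [harmonic, Finset.sum_range_succ]
  have := eulerMascheroniConstant_lt_eulerMascheroniSeq' 16
  have := log_two_gt_d9
  linarith

theorem hasDerivAt_Gamma_three_halves :
    HasDerivAt Gamma (√π * (1 - (eulerMascheroniConstant + 2 * log 2) / 2)) (3 / 2) := by
  have hshift : HasDerivAt (fun x => (x - 1) * Gamma (x - 1)) _ (3 / 2) :=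
    ((hasDerivAt_id' (3 / 2 : ℝ)).sub_const 1).mul
      (HasDerivAt.comp_sub_const (3 / 2 : ℝ) 1 (f := Gamma)
        (by rw [show (3 / 2 - 1 : ℝ) = 1 / 2 by norm_num]; exact hasDerivAt_Gamma_one_half))
  refine (hshift.congr_deriv ?_).congr_of_eventuallyEq ?_
  · rw [show (3 / 2 - 1 : ℝ) = 1 / 2 by norm_num, Gamma_one_half_eq]
    ring
  · filter_upwards [lt_mem_nhds (show (1 : ℝ) < 3 / 2 by norm_num)] with x hx
    rw [← Gamma_add_one (by linarith), sub_add_cancel]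

theorem exists_mem_Ioo_lt_of_hasDerivAt_pos {f : ℝ → ℝ} {d a b : ℝ} (hf : HasDerivAt f d b)
    (hd : 0 < d) (hab : a < b) : ∃ x ∈ Set.Ioo a b, f x < f b := by
  have hslope : ∀ᶠ x in nhdsWithin b (Set.Iio b), 0 < slope f b x :=
    ((hasDerivAt_iff_tendsto_slope.1 hf).eventually (lt_mem_nhds hd)).filter_mono
      (nhdsWithin_mono b fun _ hx => ne_of_lt hx)
  obtain ⟨x, hx, hmem⟩ := (hslope.and (Ioo_mem_nhdsLT hab)).exists
  refine ⟨x, hmem, lt_of_not_ge fun hle => hx.not_ge ?_⟩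
  rw [slope_def_field]
  exact div_nonpos_of_nonneg_of_nonpos (sub_nonneg.2 hle) (sub_nonpos.2 hmem.2.le)

/- `Gamma (3 / 2)` is the critical value, so a second solution below `3 / 2` exists because `Gamma`
is larger at `7 / 5` and increasing at `3 / 2`. -/
theorem exists_Gamma_eq_sqrt_pi_div_two :
    ∃ p : ℝ, 9 / 5 < p ∧ p < 2 ∧ Gamma ((p + 1) / 2) = √π / 2 := by
  obtain ⟨x, ⟨hx, hx'⟩, hlt⟩ := exists_mem_Ioo_lt_of_hasDerivAt_pos hasDerivAt_Gamma_three_halves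
    (mul_pos (sqrt_pos.2 pi_pos) (by linarith [eulerMascheroniConstant_add_two_mul_log_two_lt_two]))
    (show (7 / 5 : ℝ) < 3 / 2 by norm_num)
  rw [Gamma_three_halves] at hlt
  have hcont : ContinuousOn Gamma (Set.Icc (7 / 5) x) :=
    differentiableOn_Gamma_Ioi.continuousOn.mono fun y hy =>
      Set.mem_Ioi.2 (by linarith [hy.1])
  obtain ⟨z, ⟨hz, hz'⟩, hGamma⟩ :=
    intermediate_value_Ioo' hx.le hcont ⟨hlt, sqrt_pi_div_two_lt_Gamma⟩
  exact ⟨2 * z - 1, by linarith, by linarith, by rw [← hGamma]; ring_nf⟩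

theorem Gamma_le_sqrt_pi_div_two {s t : ℝ} (hs : 0 < s) (hGamma : Gamma s = √π / 2) (hst : s ≤ t)
    (ht : t ≤ 3 / 2) : Gamma t ≤ √π / 2 := by
  have hconvex := convexOn_Gamma.le_on_segment (x := s) (y := 3 / 2) (z := t) (Set.mem_Ioi.2 hs)
    (Set.mem_Ioi.2 (by norm_num)) (by rw [segment_eq_Icc (hst.trans ht)]; exact ⟨hst, ht⟩)
  rwa [hGamma, Gamma_three_halves, max_self] at hconvex

theorem exists_khintchineP0_le :
    ∃ p, khintchineP0 ≤ p ∧ 9 / 5 < p ∧ p < 2 ∧ Gamma ((p + 1) / 2) = √π / 2 := by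
  obtain ⟨p, hp, hp2, hGamma⟩ := exists_Gamma_eq_sqrt_pi_div_two
  exact ⟨p, csInf_le ⟨1, fun q hq => hq.1.le⟩ ⟨by linarith, hp2, hGamma⟩, hp, hp2, hGamma⟩

theorem Gamma_le_of_khintchineP0_lt {r : ℝ} (h : khintchineP0 < r) (hr : r < 2) :
    9 / 5 ≤ r ∧ Gamma ((r + 1) / 2) ≤ √π / 2 := by
  obtain ⟨q, hq, hq2, hGammaq⟩ := exists_Gamma_eq_sqrt_pi_div_two
  obtain ⟨p, ⟨hp, -, hGamma⟩, hpr⟩ := exists_lt_of_csInf_lt (s := {p : ℝ | 1 < p ∧ p < 2 ∧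
    Gamma ((p + 1) / 2) = √π / 2}) ⟨q, by linarith, hq2, hGammaq⟩ h
  refine ⟨?_, Gamma_le_sqrt_pi_div_two (by linarith) hGamma (by linarith) (by linarith)⟩
  by_contra! hlt
  exact sqrt_pi_div_two_lt_Gamma.not_ge
    (Gamma_le_sqrt_pi_div_two (by linarith) hGamma (by linarith) (by norm_num))

theorem khintchineP0_lt_two : khintchineP0 < 2 := by
  obtain ⟨p, hp, -, hp2, -⟩ := exists_khintchineP0_le
  exact hp.trans_lt hp2

theorem khintchineA_of_two_le {r : ℝ} (hr : 2 ≤ r) : khintchineA r = 1 := by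
  rw [khintchineA, if_neg (not_le.2 (khintchineP0_lt_two.trans_le hr)), if_neg (not_lt.2 hr)]

theorem khintchineA_nonneg (r : ℝ) : 0 ≤ khintchineA r := by
  unfold khintchineA
  split_ifs with hle hlt
  · positivity
  · have hr := (Gamma_le_of_khintchineP0_lt (not_le.1 hle) hlt).1
    have := Gamma_pos_of_pos (by linarith : 0 < (r + 1) / 2)
    positivity
  · exact zero_le_one

/-! ### Rademacher sums -/

theorem measurable_rademacher (j : ℕ) : Measurable (rademacher j) := by
  have hsign : Measurable Real.sign :=
    Measurable.ite measurableSet_Iio measurable_const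
      (Measurable.ite measurableSet_Ioi measurable_const measurable_const)
  exact hsign.comp (by fun_prop)

theorem abs_rademacher_le_one (j : ℕ) (t : ℝ) : |rademacher j t| ≤ 1 := by
  rcases Real.sign_apply_eq (Real.sin ((2 : ℝ) ^ j * Real.pi * t)) with h | h | h <;>
    simp [rademacher, h]

theorem rademacher_succ (j : ℕ) (t : ℝ) : rademacher (j + 1) t = rademacher j (2 * t) := by
  simp only [rademacher]
  ring_nf

theorem rademacher_add_one (j : ℕ) (t : ℝ) : rademacher (j + 1) (t + 1) = rademacher (j + 1) t := by
  simp only [rademacher]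
  rw [show (2 : ℝ) ^ (j + 1) * π * (t + 1) = 2 ^ (j + 1) * π * t + (2 ^ j : ℕ) * (2 * π) by
    push_cast; ring, sin_add_nat_mul_two_pi]

theorem rademacher_one_of_lt_half {t : ℝ} (h0 : 0 < t) (h : t < 1 / 2) : rademacher 1 t = 1 :=
  Real.sign_of_pos (sin_pos_of_pos_of_lt_pi (by positivity) (by nlinarith [pi_pos]))

theorem rademacher_one_of_half_lt {t : ℝ} (h0 : 1 / 2 < t) (h : t < 1) : rademacher 1 t = -1 := by
  refine Real.sign_of_neg ?_
  rw [show (2 : ℝ) ^ 1 * π * t = (2 * t - 1) * π + π by ring, sin_add_pi, neg_lt_zero]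
  exact sin_pos_of_pos_of_lt_pi (by nlinarith [pi_pos]) (by nlinarith [pi_pos])

/-- The Rademacher sum `∑ j, a_j r_j`. The entries of `Fin N` start at `0`, the Rademacher functions
at `r_1`. -/
noncomputable def rademacherSum {N : ℕ} (a : Fin N → ℝ) (t : ℝ) : ℝ :=
  ∑ i : Fin N, rademacher (i.1 + 1) t * a i

theorem measurable_rademacherSum {N : ℕ} (a : Fin N → ℝ) : Measurable (rademacherSum a) :=
  Finset.measurable_sum _ fun _ _ => (measurable_rademacher _).mul_const _

theorem abs_rademacherSum_le {N : ℕ} (a : Fin N → ℝ) (t : ℝ) :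
    |rademacherSum a t| ≤ ∑ i, |a i| := by
  refine (Finset.abs_sum_le_sum_abs _ _).trans (Finset.sum_le_sum fun i _ => ?_)
  rw [abs_mul]
  exact mul_le_of_le_one_left (abs_nonneg _) (abs_rademacher_le_one _ _)

theorem rademacherSum_add_one {N : ℕ} (a : Fin N → ℝ) (t : ℝ) :
    rademacherSum a (t + 1) = rademacherSum a t := by
  simp only [rademacherSum, rademacher_add_one]

theorem rademacherSum_succ {N : ℕ} (a : Fin (N + 1) → ℝ) (t : ℝ) :
    rademacherSum a t = rademacher 1 t * a 0 + rademacherSum (Fin.tail a) (2 * t) := by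
  simp only [rademacherSum, Fin.sum_univ_succ, Fin.val_zero, Fin.val_succ, rademacher_succ _ t]
  rfl

theorem integrable_comp_rademacherSum {μ : Measure ℝ} [IsFiniteMeasure μ] {φ : ℝ → ℝ}
    (hφ : Continuous φ) {N : ℕ} (a : Fin N → ℝ) (x : ℝ) :
    Integrable (fun t => φ (x + rademacherSum a t)) μ := by
  obtain ⟨C, hC⟩ := (isCompact_closedBall x (∑ i, |a i|)).exists_bound_of_continuousOn
    hφ.continuousOn
  refine Integrable.of_bound (hφ.measurable.comp
    ((measurable_rademacherSum a).const_add x)).aestronglyMeasurable C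
    (ae_of_all _ fun t => hC _ ?_)
  rw [mem_closedBall_iff_norm, add_sub_cancel_left]
  exact abs_rademacherSum_le a t

section Halves

variable (φ : ℝ → ℝ) {N : ℕ} (a : Fin (N + 1) → ℝ) (x : ℝ)

theorem intervalIntegral_comp_rademacherSum_left_half :
    ∫ t in (0 : ℝ)..(1 / 2), φ (x + rademacherSum a t) =
      (∫ t in (0 : ℝ)..1, φ (x + a 0 + rademacherSum (Fin.tail a) t)) / 2 := by
  rw [intervalIntegral.integral_congr_Ioo_of_le (by norm_num)
    (g := fun t => φ (x + a 0 + rademacherSum (Fin.tail a) (2 * t))) fun t ht => ?_,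
    intervalIntegral.integral_comp_mul_left
      (fun t => φ (x + a 0 + rademacherSum (Fin.tail a) t)) two_ne_zero]
  · norm_num
    ring
  · simp only
    rw [rademacherSum_succ, rademacher_one_of_lt_half ht.1 ht.2, one_mul, add_assoc]

theorem intervalIntegral_comp_rademacherSum_right_half :
    ∫ t in (1 / 2 : ℝ)..1, φ (x + rademacherSum a t) =
      (∫ t in (0 : ℝ)..1, φ (x - a 0 + rademacherSum (Fin.tail a) t)) / 2 := by
  have hperiod := intervalIntegral.integral_comp_add_right (a := 0) (b := 1)
    (fun t => φ (x - a 0 + rademacherSum (Fin.tail a) t)) 1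
  simp only [rademacherSum_add_one] at hperiod
  rw [intervalIntegral.integral_congr_Ioo_of_le (by norm_num)
    (g := fun t => φ (x - a 0 + rademacherSum (Fin.tail a) (2 * t))) fun t ht => ?_,
    intervalIntegral.integral_comp_mul_left
      (fun t => φ (x - a 0 + rademacherSum (Fin.tail a) t)) two_ne_zero, hperiod]
  · norm_num
    ring
  · simp only
    rw [rademacherSum_succ, rademacher_one_of_half_lt ht.1 ht.2, neg_one_mul, ← add_assoc,
      ← sub_eq_add_neg]

end Halves

theorem intervalIntegral_comp_rademacherSum {φ : ℝ → ℝ} (hφ : Continuous φ) {N : ℕ}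
    (a : Fin N → ℝ) (x : ℝ) :
    ∫ t in (0 : ℝ)..1, φ (x + rademacherSum a t) = signAverage φ (List.ofFn a) x := by
  induction N generalizing x with
  | zero => simp [rademacherSum, signAverage]
  | succ N ih =>
    have hint : ∀ u v : ℝ,
        IntervalIntegrable (fun t => φ (x + rademacherSum a t)) volume u v := fun u v =>
      ⟨integrable_comp_rademacherSum hφ a x, integrable_comp_rademacherSum hφ a x⟩
    rw [← intervalIntegral.integral_add_adjacent_intervals (hint 0 (1 / 2)) (hint _ 1),
      intervalIntegral_comp_rademacherSum_left_half, intervalIntegral_comp_rademacherSum_right_half,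
      ih, ih, ← add_div, List.ofFn_succ, signAverage]
    rfl

theorem integral_comp_rademacherSum {φ : ℝ → ℝ} (hφ : Continuous φ) {N : ℕ} (a : Fin N → ℝ) :
    ∫ t in Set.Icc (0 : ℝ) 1, φ (rademacherSum a t) = signAverage φ (List.ofFn a) 0 := by
  rw [integral_Icc_eq_integral_Ioc, ← intervalIntegral.integral_of_le zero_le_one,
    ← intervalIntegral_comp_rademacherSum hφ]
  simp only [zero_add]

theorem integral_abs_rademacherSum_rpow {p : ℝ} (hp : 0 ≤ p) {N : ℕ} (a : Fin N → ℝ) :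
    ∫ t in Set.Icc (0 : ℝ) 1, |rademacherSum a t| ^ p = signMoment p (List.ofFn a) :=
  integral_comp_rademacherSum (φ := fun y => |y| ^ p)
    (continuous_abs.rpow_const fun _ => Or.inr hp) a

theorem signAverage_sq (l : List ℝ) (x : ℝ) :
    signAverage (fun y => y ^ 2) l x = x ^ 2 + sqSum l := by
  induction l generalizing x with
  | nil => simp [signAverage]
  | cons a l ih => rw [signAverage, ih, ih, sqSum_cons]; ring

theorem sqSum_ofFn {N : ℕ} (a : Fin N → ℝ) : sqSum (List.ofFn a) = ∑ i, a i ^ 2 := by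
  rw [sqSum, List.map_ofFn, List.sum_ofFn]
  rfl

theorem integral_rademacherSum_sq {N : ℕ} (a : Fin N → ℝ) :
    ∫ t in Set.Icc (0 : ℝ) 1, rademacherSum a t ^ 2 = ∑ i, a i ^ 2 := by
  rw [integral_comp_rademacherSum (φ := fun y => y ^ 2) (by fun_prop), signAverage_sq, sqSum_ofFn,
    zero_pow two_ne_zero, zero_add]

/-! ### Khintchine's inequality -/

section Moments

variable {Ω : Type*} [MeasurableSpace Ω] {μ : Measure Ω} {f : Ω → ℝ} {p r s : ℝ}

theorem integrable_abs_rpow_of_memLp (hr : 0 < r) (hf : MemLp f (ENNReal.ofReal r) μ) :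
    Integrable (fun x => |f x| ^ r) μ := by
  simpa only [ENNReal.toReal_ofReal hr.le, norm_eq_abs] using
    hf.integrable_norm_rpow (by simpa using hr) ENNReal.ofReal_ne_top

theorem memLp_abs_rpow (hf : AEMeasurable f μ) (hs : 0 < s)
    (h : Integrable (fun x => |f x| ^ (r * s)) μ) :
    MemLp (fun x => |f x| ^ r) (ENNReal.ofReal s) μ := by
  refine (integrable_norm_rpow_iff (hf.abs.pow_const r).aestronglyMeasurable
    (by simpa using hs) ENNReal.ofReal_ne_top).1 ?_
  simpa only [norm_of_nonneg (rpow_nonneg (abs_nonneg _) _), ENNReal.toReal_ofReal hs.le,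
    ← rpow_mul (abs_nonneg _)] using h

theorem integral_abs_rpow_le_rpow_mul_rpow (hf : AEMeasurable f μ) (hr : 0 < r) (hrp : r < p)
    (hps : p < s) (hfr : Integrable (fun x => |f x| ^ r) μ)
    (hfs : Integrable (fun x => |f x| ^ s) μ) :
    ∫ x, |f x| ^ p ∂μ ≤
      (∫ x, |f x| ^ r ∂μ) ^ ((s - p) / (s - r)) * (∫ x, |f x| ^ s ∂μ) ^ ((p - r) / (s - r)) := by
  have hsr : 0 < s - r := by linarith
  have hs : 0 < s := by linarith
  set θ := (s - p) / (s - r)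
  set η := (p - r) / (s - r)
  have hθ : 0 < θ := div_pos (by linarith) hsr
  have hη : 0 < η := div_pos (by linarith) hsr
  have hsum : θ + η = 1 := by simp only [θ, η]; field_simp; ring
  have hp : r * θ + s * η = p := by simp only [θ, η]; field_simp; ring
  have hholder := integral_mul_le_Lp_mul_Lq_of_nonneg (μ := μ) (p := θ⁻¹) (q := η⁻¹)
    (f := fun x => |f x| ^ (r * θ)) (g := fun x => |f x| ^ (s * η))
    ⟨by rw [inv_inv, inv_inv, hsum, inv_one], by positivity, by positivity⟩
    (ae_of_all _ fun x => by positivity) (ae_of_all _ fun x => by positivity)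
    (memLp_abs_rpow hf (by positivity) (by rwa [mul_inv_cancel_right₀ hθ.ne']))
    (memLp_abs_rpow hf (by positivity) (by rwa [mul_inv_cancel_right₀ hη.ne']))
  simpa only [← rpow_add_of_nonneg (abs_nonneg _) (mul_pos hr hθ).le (mul_pos hs hη).le, hp,
    ← rpow_mul (abs_nonneg _), mul_inv_cancel_right₀ hθ.ne', mul_inv_cancel_right₀ hη.ne',
    one_div, inv_inv] using hholder

theorem rpow_integral_abs_rpow_le [IsProbabilityMeasure μ] (hs : 0 < s) (hsr : s ≤ r)
    (hfs : Integrable (fun x => |f x| ^ s) μ) (hfr : Integrable (fun x => |f x| ^ r) μ) :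
    (∫ x, |f x| ^ s ∂μ) ^ (r / s) ≤ ∫ x, |f x| ^ r ∂μ := by
  have hpow : ∀ x, |f x| ^ r = (|f x| ^ s) ^ (r / s) := fun x => by
    rw [← rpow_mul (abs_nonneg _), mul_div_cancel₀ _ hs.ne']
  have hone : 1 ≤ r / s := (one_le_div hs).2 hsr
  simp only [hpow] at hfr ⊢
  exact (convexOn_rpow hone).map_integral_le
    (continuousOn_id.rpow_const fun _ _ => Or.inr (zero_le_one.trans hone)) isClosed_Ici
    (ae_of_all _ fun x => rpow_nonneg (abs_nonneg _) _) hfs hfr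

end Moments

theorem integrable_abs_rademacherSum_rpow {μ : Measure ℝ} [IsFiniteMeasure μ] {p : ℝ} (hp : 0 ≤ p)
    {N : ℕ} (a : Fin N → ℝ) : Integrable (fun t => |rademacherSum a t| ^ p) μ := by
  simpa only [zero_add] using integrable_comp_rademacherSum (φ := fun y => |y| ^ p)
    (continuous_abs.rpow_const fun _ => Or.inr hp) a 0

theorem gaussAbsMoment_mul_le_integral_abs_rademacherSum_rpow {p : ℝ} (hp : 9 / 5 ≤ p) (hp2 : p < 2)
    (hC : gaussAbsMoment p ≤ 2 ^ (p / 2 - 1)) {N : ℕ} (a : Fin N → ℝ) :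
    gaussAbsMoment p * (∑ i, a i ^ 2) ^ (p / 2) ≤
      ∫ t in Set.Icc (0 : ℝ) 1, |rademacherSum a t| ^ p := by
  rw [integral_abs_rademacherSum_rpow (by linarith), ← sqSum_ofFn]
  exact gaussAbsMoment_mul_sqSum_rpow_le_signMoment hp hp2 hC _

theorem exists_khintchineP0_le_two_rpow_mul_le : ∃ p, khintchineP0 ≤ p ∧ p < 2 ∧
    ∀ {N : ℕ} (a : Fin N → ℝ), 2 ^ (p / 2 - 1) * (∑ i, a i ^ 2) ^ (p / 2) ≤
      ∫ t in Set.Icc (0 : ℝ) 1, |rademacherSum a t| ^ p := by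
  obtain ⟨p, hp₀, hp, hp2, hΓ⟩ := exists_khintchineP0_le
  refine ⟨p, hp₀, hp2, fun a => ?_⟩
  have hmoment : gaussAbsMoment p = 2 ^ (p / 2 - 1) := by
    have := sqrt_pos.2 pi_pos
    rw [gaussAbsMoment, hΓ, rpow_sub_one two_ne_zero]
    field_simp
  rw [← hmoment]
  exact gaussAbsMoment_mul_le_integral_abs_rademacherSum_rpow hp.le hp2 hmoment.le a

theorem rpow_mul_rpow_le_of_le_interpolation {c p r M R : ℝ} (hc : 0 < c) (hr : 0 < r)
    (hrp : r < p) (hp : p < 2) (hM : 0 ≤ M) (hR : 0 ≤ R)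
    (h : c ^ (p / 2 - 1) * M ^ (p / 2) ≤ R ^ ((2 - p) / (2 - r)) * M ^ ((p - r) / (2 - r))) :
    c ^ (r / 2 - 1) * M ^ (r / 2) ≤ R := by
  rcases hM.eq_or_lt with rfl | hM
  · rwa [zero_rpow (by positivity), mul_zero]
  have h2r : 0 < 2 - r := by linarith
  have h2p : 0 < 2 - p := by linarith
  refine (rpow_le_rpow_iff (z := (2 - p) / (2 - r)) (by positivity) hR (div_pos h2p h2r)).1 ?_
  rw [mul_rpow (by positivity) (by positivity), ← rpow_mul hc.le, ← rpow_mul hM.le,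
    show (r / 2 - 1) * ((2 - p) / (2 - r)) = p / 2 - 1 by field_simp; ring,
    show r / 2 * ((2 - p) / (2 - r)) = p / 2 - (p - r) / (2 - r) by field_simp; ring,
    rpow_sub hM, mul_div_assoc', div_le_iff₀ (by positivity)]
  exact h

theorem two_rpow_mul_le_integral_abs_rademacherSum_rpow {r : ℝ} (hr : 0 < r)
    (h : r ≤ khintchineP0) {N : ℕ} (a : Fin N → ℝ) :
    2 ^ (r / 2 - 1) * (∑ i, a i ^ 2) ^ (r / 2) ≤
      ∫ t in Set.Icc (0 : ℝ) 1, |rademacherSum a t| ^ r := by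
  obtain ⟨p, hp₀, hp2, hcritical⟩ := exists_khintchineP0_le_two_rpow_mul_le
  rcases (h.trans hp₀).eq_or_lt with rfl | hrp
  · exact hcritical a
  have hinterp := integral_abs_rpow_le_rpow_mul_rpow
    (μ := volume.restrict (Set.Icc (0 : ℝ) 1)) (measurable_rademacherSum a).aemeasurable hr hrp hp2
    (integrable_abs_rademacherSum_rpow hr.le a) (integrable_abs_rademacherSum_rpow zero_le_two a)
  simp only [rpow_two, sq_abs, integral_rademacherSum_sq] at hinterp
  exact rpow_mul_rpow_le_of_le_interpolation two_pos hr hrp hp2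
    (Finset.sum_nonneg fun _ _ => sq_nonneg _) (integral_nonneg fun _ => by positivity)
    ((hcritical a).trans hinterp)

theorem khintchineA_rpow_of_le_khintchineP0 {r : ℝ} (hr : 0 < r) (h : r ≤ khintchineP0) :
    khintchineA r ^ r = (2 ^ (r / 2 - 1))⁻¹ := by
  rw [khintchineA, if_pos h, ← rpow_mul two_pos.le, ← rpow_neg two_pos.le]
  congr 1
  field_simp
  ring

theorem khintchineA_rpow_of_khintchineP0_lt {r : ℝ} (hr : 0 < r) (h : khintchineP0 < r)
    (hr2 : r < 2) : khintchineA r ^ r = (gaussAbsMoment r)⁻¹ := by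
  have hratio : 0 ≤ Gamma ((r + 1) / 2) / √π :=
    div_nonneg (Gamma_nonneg_of_nonneg (by linarith)) (sqrt_nonneg π)
  rw [khintchineA, if_neg h.not_ge, if_pos hr2, mul_rpow (by positivity) (rpow_nonneg hratio _),
    ← rpow_mul hratio, neg_mul, one_div_mul_cancel hr.ne', rpow_neg_one, gaussAbsMoment,
    mul_div_assoc, mul_inv, one_div, inv_rpow (sqrt_nonneg 2), sqrt_eq_rpow, ← rpow_mul two_pos.le,
    one_div_mul_eq_div]

instance isProbabilityMeasure_restrict_Icc :
    IsProbabilityMeasure (volume.restrict (Set.Icc (0 : ℝ) 1)) := ⟨by simp⟩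

theorem khintchine {r : ℝ} (hr : 0 < r) {N : ℕ} (a : Fin N → ℝ) :
    (∑ i, a i ^ 2) ^ (r / 2) ≤ khintchineA r ^ r *
      ∫ t in Set.Icc (0 : ℝ) 1, |rademacherSum a t| ^ r := by
  rcases le_or_gt r khintchineP0 with h | h
  · rw [khintchineA_rpow_of_le_khintchineP0 hr h, ← div_eq_inv_mul, le_div_iff₀' (by positivity)]
    exact two_rpow_mul_le_integral_abs_rademacherSum_rpow hr h a
  rcases lt_or_ge r 2 with hr2 | hr2
  · obtain ⟨hr95, hΓ⟩ := Gamma_le_of_khintchineP0_lt h hr2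
    rw [khintchineA_rpow_of_khintchineP0_lt hr h hr2, ← div_eq_inv_mul,
      le_div_iff₀' (gaussAbsMoment_pos (by linarith))]
    exact gaussAbsMoment_mul_le_integral_abs_rademacherSum_rpow hr95 hr2
      (gaussAbsMoment_le_iff_Gamma_le.2 hΓ) a
  · have hjensen := rpow_integral_abs_rpow_le (μ := volume.restrict (Set.Icc (0 : ℝ) 1)) two_pos hr2
      (integrable_abs_rademacherSum_rpow zero_le_two a) (integrable_abs_rademacherSum_rpow hr.le a)
    rw [khintchineA_of_two_le hr2, one_rpow, one_mul]
    simpa only [rpow_two, sq_abs, integral_rademacherSum_sq] using hjensen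

/-! ### Tensorization -/

theorem sum_integral_rpow_le {Ω ι : Type*} [MeasurableSpace Ω] [Fintype ι] {μ : Measure Ω}
    {g : ι → Ω → ℝ} (hg : ∀ i, Integrable (g i) μ) (h0 : ∀ i x, 0 ≤ g i x) {q : ℝ} (hq : 1 ≤ q) :
    (∑ i, (∫ x, g i x ∂μ) ^ q) ^ (1 / q) ≤ ∫ x, (∑ i, g i x ^ q) ^ (1 / q) ∂μ := by
  have hqt : (ENNReal.ofReal q).toReal = q := ENNReal.toReal_ofReal (by linarith)
  have : Fact (1 ≤ ENNReal.ofReal q) := ⟨by simpa using hq⟩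
  -- Minkowski's inequality is the norm inequality for the `ℓ^q`-valued Bochner integral of `G`.
  let G : Ω → PiLp (ENNReal.ofReal q) fun _ : ι => ℝ := fun x => WithLp.toLp _ fun i => g i x
  have hG : Integrable G μ :=
    (PiLp.continuousLinearEquiv (ENNReal.ofReal q) ℝ fun _ : ι => ℝ).symm.toContinuousLinearMap
      |>.integrable_comp (φ := fun x i => g i x) (Integrable.of_eval hg)
  have hGi : ∀ i, (∫ x, G x ∂μ) i = ∫ x, g i x ∂μ := fun i =>
    ((PiLp.proj (𝕜 := ℝ) (ENNReal.ofReal q) (fun _ : ι => ℝ) i).integral_comp_comm hG).symm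
  have h := norm_integral_le_integral_norm (μ := μ) G
  simpa only [PiLp.norm_eq_sum (p := ENNReal.ofReal q) (by rw [hqt]; linarith), hqt, hGi,
    norm_of_nonneg (integral_nonneg (h0 _)), G, norm_of_nonneg (h0 _ _)] using h

theorem sum_rpow_le_mul_sum_rpow {ι : Type*} [Fintype ι] {S V : ι → ℝ} {K s : ℝ} (hs : 0 < s)
    (hK : 0 ≤ K) (hS : ∀ i, 0 ≤ S i) (hV : ∀ i, 0 ≤ V i) (h : ∀ i, S i ^ s ≤ K * V i) :
    (∑ i, S i) ^ s ≤ K * (∑ i, V i ^ s⁻¹) ^ s := by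
  have hSV : ∀ i, S i ≤ (K * V i) ^ s⁻¹ := fun i => by
    simpa only [rpow_rpow_inv (hS i) hs.ne'] using
      rpow_le_rpow (rpow_nonneg (hS i) s) (h i) (inv_nonneg.2 hs.le)
  calc (∑ i, S i) ^ s
      ≤ (∑ i, (K * V i) ^ s⁻¹) ^ s :=
        rpow_le_rpow (Finset.sum_nonneg fun i _ => hS i) (Finset.sum_le_sum fun i _ => hSV i) hs.le
    _ = K * (∑ i, V i ^ s⁻¹) ^ s := by
        simp only [mul_rpow hK (hV _), ← Finset.mul_sum]
        rw [mul_rpow (rpow_nonneg hK _) (Finset.sum_nonneg fun i _ => rpow_nonneg (hV i) _),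
          rpow_inv_rpow hK hs.ne']

theorem sum_fin_succ_arrow {M ι : Type*} [AddCommMonoid M] [Fintype ι] {m : ℕ}
    (f : (Fin (m + 1) → ι) → M) : ∑ i, f i = ∑ i : Fin m → ι, ∑ j, f (Fin.cons j i) := by
  rw [← Fintype.sum_equiv (Fin.consEquiv fun _ => ι)
    (fun x => f (Fin.cons x.1 x.2)) f fun _ => rfl]
  exact Fintype.sum_prod_type_right _

section Chaos

variable {ι Ω : Type*} [Fintype ι]

/-- The decoupled homogeneous chaos `∑ y_{i₁ ⋯ i_m} e_{i₁}(t₁) ⋯ e_{i_m}(t_m)` of degree `m` over a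
family `e` of functions. -/
noncomputable def chaos (e : ι → Ω → ℝ) {m : ℕ} (y : (Fin m → ι) → ℝ) (t : Fin m → Ω) : ℝ :=
  ∑ i : Fin m → ι, (∏ k, e (i k) (t k)) * y i

theorem chaos_zero (e : ι → Ω → ℝ) (y : (Fin 0 → ι) → ℝ) (t : Fin 0 → Ω) :
    chaos e y t = y default := by
  simp [chaos]

theorem chaos_cons (e : ι → Ω → ℝ) {m : ℕ} (y : (Fin (m + 1) → ι) → ℝ) (s : Ω) (t : Fin m → Ω) :
    chaos e y (Fin.cons s t : Fin (m + 1) → Ω) =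
      chaos e (fun i => ∑ j, e j s * y (Fin.cons j i)) t := by
  simp only [chaos, sum_fin_succ_arrow, Fin.prod_univ_succ, Fin.cons_zero, Fin.cons_succ,
    Finset.mul_sum]
  exact Finset.sum_congr rfl fun i _ => Finset.sum_congr rfl fun j _ => by ring

variable [MeasurableSpace Ω] {μ : Measure Ω} {e : ι → Ω → ℝ} {r : ℝ}

theorem memLp_prod_pi [SigmaFinite μ] {m : ℕ} {f : Fin m → Ω → ℝ} (hr : 0 < r)
    (hf : ∀ k, MemLp (f k) (ENNReal.ofReal r) μ) :
    MemLp (fun t : Fin m → Ω => ∏ k, f k (t k)) (ENNReal.ofReal r) (Measure.pi fun _ => μ) := by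
  have hmeas : AEStronglyMeasurable (fun t : Fin m → Ω => ∏ k, f k (t k))
      (Measure.pi fun _ => μ) := Finset.aestronglyMeasurable_fun_prod _ fun k _ =>
    (hf k).1.comp_quasiMeasurePreserving (Measure.quasiMeasurePreserving_eval _ k)
  refine (integrable_norm_rpow_iff hmeas (by simpa using hr) ENNReal.ofReal_ne_top).1 ?_
  simp only [norm_prod, ← finsetProd_rpow _ _ (fun _ _ => norm_nonneg _)]
  exact Integrable.fintype_prod fun k =>
    (hf k).integrable_norm_rpow (by simpa using hr) ENNReal.ofReal_ne_top

theorem memLp_chaos [SigmaFinite μ] (hr : 0 < r) (he : ∀ j, MemLp (e j) (ENNReal.ofReal r) μ)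
    {m : ℕ} (y : (Fin m → ι) → ℝ) :
    MemLp (chaos e y) (ENNReal.ofReal r) (Measure.pi fun _ => μ) :=
  memLp_finsetSum _ fun i _ => (memLp_prod_pi hr fun k => he (i k)).mul_const (y i)

theorem measurePreserving_fin_cons [SigmaFinite μ] (m : ℕ) :
    MeasurePreserving (fun x : Ω × (Fin m → Ω) => (Fin.cons x.1 x.2 : Fin (m + 1) → Ω))
      (μ.prod (Measure.pi fun _ => μ)) (Measure.pi fun _ => μ) := by
  have hmp := (measurePreserving_piFinSuccAbove (fun _ : Fin (m + 1) => μ) 0).symm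
  have hcons : ⇑(MeasurableEquiv.piFinSuccAbove (fun _ : Fin (m + 1) => Ω) 0).symm =
      fun x => (Fin.cons x.1 x.2 : Fin (m + 1) → Ω) := funext fun _ => Fin.insertNth_zero' _ _
  rwa [hcons] at hmp

theorem integrable_abs_chaos_cons_rpow [SigmaFinite μ] (hr : 0 < r)
    (he : ∀ j, MemLp (e j) (ENNReal.ofReal r) μ) {m : ℕ} (y : (Fin (m + 1) → ι) → ℝ) :
    Integrable (fun x : Ω × (Fin m → Ω) =>
        |chaos e (fun i => ∑ j, e j x.1 * y (Fin.cons j i)) x.2| ^ r)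
      (μ.prod (Measure.pi fun _ => μ)) := by
  simpa only [Function.comp_def, chaos_cons] using
    (measurePreserving_fin_cons m).integrable_comp_of_integrable
      (integrable_abs_rpow_of_memLp hr (memLp_chaos hr he y))

theorem integral_abs_chaos_rpow_succ [SigmaFinite μ] (hr : 0 < r)
    (he : ∀ j, MemLp (e j) (ENNReal.ofReal r) μ) {m : ℕ} (y : (Fin (m + 1) → ι) → ℝ) :
    ∫ t, |chaos e y t| ^ r ∂(Measure.pi fun _ => μ) =
      ∫ s, ∫ t, |chaos e (fun i => ∑ j, e j s * y (Fin.cons j i)) t| ^ r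
        ∂(Measure.pi fun _ : Fin m => μ) ∂μ := by
  rw [← (measurePreserving_fin_cons m).map_eq,
    integral_map (measurePreserving_fin_cons m).aemeasurable]
  · simp only [chaos_cons]
    exact integral_prod _ (integrable_abs_chaos_cons_rpow hr he y)
  · rw [(measurePreserving_fin_cons m).map_eq]
    exact (integrable_abs_rpow_of_memLp hr (memLp_chaos hr he y)).1

theorem sum_sq_rpow_le_integral_sum_sq_rpow {κ : Type*} [Fintype κ] {K : ℝ} (hr : 0 < r)
    (hr2 : r ≤ 2) (hK : 0 ≤ K) (he : ∀ j, MemLp (e j) (ENNReal.ofReal r) μ)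
    (h : ∀ a : ι → ℝ, (∑ j, a j ^ 2) ^ (r / 2) ≤ K * ∫ s, |∑ j, e j s * a j| ^ r ∂μ)
    (y : κ → ι → ℝ) :
    (∑ i, ∑ j, y i j ^ 2) ^ (r / 2) ≤
      K * ∫ s, (∑ i, (∑ j, e j s * y i j) ^ 2) ^ (r / 2) ∂μ := by
  have hint : ∀ i, Integrable (fun s => |∑ j, e j s * y i j| ^ r) μ := fun i =>
    integrable_abs_rpow_of_memLp hr (memLp_finsetSum _ fun j _ => (he j).mul_const _)
  have hmink := sum_integral_rpow_le hint (fun _ _ => by positivity) ((one_le_div hr).2 hr2)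
  simp only [← rpow_mul (abs_nonneg _), mul_div_cancel₀ _ hr.ne', rpow_two, sq_abs,
    one_div_div] at hmink
  refine (sum_rpow_le_mul_sum_rpow (by positivity) hK
    (fun i => Finset.sum_nonneg fun j _ => sq_nonneg (y i j))
    (fun i => integral_nonneg fun s => by positivity) fun i => h (y i)).trans ?_
  rw [inv_div]
  gcongr

theorem sum_sq_rpow_le_integral_abs_chaos_rpow [SigmaFinite μ] {K : ℝ} (hr : 0 < r) (hr2 : r ≤ 2)
    (hK : 0 ≤ K) (he : ∀ j, MemLp (e j) (ENNReal.ofReal r) μ)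
    (h : ∀ a : ι → ℝ, (∑ j, a j ^ 2) ^ (r / 2) ≤ K * ∫ s, |∑ j, e j s * a j| ^ r ∂μ)
    {m : ℕ} (y : (Fin m → ι) → ℝ) :
    (∑ i, y i ^ 2) ^ (r / 2) ≤ K ^ m * ∫ t, |chaos e y t| ^ r ∂(Measure.pi fun _ => μ) := by
  induction m with
  | zero =>
    have hsq : (y default ^ 2) ^ (r / 2) = |y default| ^ r := (abs_rpow_eq_sq_rpow _ _).symm
    simp [chaos_zero, hsq, Measure.real, Measure.pi_empty_univ]
  | succ m ih =>
    calc (∑ i, y i ^ 2) ^ (r / 2)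
        = (∑ i : Fin m → ι, ∑ j, y (Fin.cons j i) ^ 2) ^ (r / 2) := by
          rw [sum_fin_succ_arrow fun i => y i ^ 2]
      _ ≤ K * ∫ s, (∑ i : Fin m → ι, (∑ j, e j s * y (Fin.cons j i)) ^ 2) ^ (r / 2) ∂μ :=
          sum_sq_rpow_le_integral_sum_sq_rpow hr hr2 hK he h fun i j => y (Fin.cons j i)
      _ ≤ K * ∫ s, K ^ m * ∫ t, |chaos e (fun i => ∑ j, e j s * y (Fin.cons j i)) t| ^ r
            ∂(Measure.pi fun _ : Fin m => μ) ∂μ :=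
          mul_le_mul_of_nonneg_left (integral_mono_of_nonneg
            (ae_of_all _ fun _ => by positivity)
            ((integrable_abs_chaos_cons_rpow hr he y).integral_prod_left.const_mul _)
            (ae_of_all _ fun s => ih _)) hK
      _ = K ^ (m + 1) * ∫ t, |chaos e y t| ^ r ∂(Measure.pi fun _ => μ) := by
          rw [integral_const_mul, ← mul_assoc, ← pow_succ', integral_abs_chaos_rpow_succ hr he]

end Chaos

/-! ### The multiple Khintchine inequality -/

theorem memLp_rademacher {μ : Measure ℝ} [IsFiniteMeasure μ] (j : ℕ) (p : ENNReal) :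
    MemLp (rademacher j) p μ :=
  MemLp.of_bound (measurable_rademacher j).aestronglyMeasurable 1
    (ae_of_all _ (abs_rademacher_le_one j))

theorem sum_sq_rpow_le_integral_abs_rademacher_chaos_rpow {r : ℝ} (hr : 0 < r) {m N : ℕ}
    (y : (Fin m → Fin N) → ℝ) :
    (∑ i, y i ^ 2) ^ (r / 2) ≤ (khintchineA r ^ m) ^ r *
      ∫ t, |chaos (fun i : Fin N => rademacher (i.1 + 1)) y t| ^ r
        ∂(Measure.pi fun _ => volume.restrict (Set.Icc (0 : ℝ) 1)) := by
  have he : ∀ (p : ENNReal) (j : Fin N),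
      MemLp (rademacher (j.1 + 1)) p (volume.restrict (Set.Icc (0 : ℝ) 1)) :=
    fun p j => memLp_rademacher _ p
  rcases le_total r 2 with hr2 | hr2
  · rw [← rpow_natCast_mul (khintchineA_nonneg r), mul_comm (m : ℝ),
      rpow_mul_natCast (khintchineA_nonneg r)]
    exact sum_sq_rpow_le_integral_abs_chaos_rpow hr hr2 (rpow_nonneg (khintchineA_nonneg r) r)
      (he _) (khintchine hr) y
  · have hsq := sum_sq_rpow_le_integral_abs_chaos_rpow two_pos le_rfl
      (rpow_nonneg (khintchineA_nonneg 2) 2) (he _) (khintchine two_pos) y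
    have hjensen := rpow_integral_abs_rpow_le two_pos hr2
      (integrable_abs_rpow_of_memLp two_pos (memLp_chaos two_pos (he _) y))
      (integrable_abs_rpow_of_memLp hr (memLp_chaos hr (he _) y))
    rw [khintchineA_of_two_le le_rfl, one_rpow, one_pow, one_mul, div_self two_ne_zero,
      rpow_one] at hsq
    rw [khintchineA_of_two_le hr2, one_pow, one_rpow, one_mul]
    exact (rpow_le_rpow (Finset.sum_nonneg fun _ _ => sq_nonneg _) hsq (by positivity)).trans
      hjensen

theorem sqrt_le_mul_rpow_of_rpow_le {M A R r : ℝ} (hr : 0 < r) (hM : 0 ≤ M) (hA : 0 ≤ A)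
    (hR : 0 ≤ R) (h : M ^ (r / 2) ≤ A ^ r * R) : M ^ (1 / 2 : ℝ) ≤ A * R ^ (1 / r) := by
  have hroot := rpow_le_rpow (by positivity) h (one_div_pos.2 hr).le
  rwa [mul_rpow (by positivity) hR, ← rpow_mul hA, mul_one_div_cancel hr.ne', rpow_one,
    ← rpow_mul hM, show r / 2 * (1 / r) = 1 / 2 by field_simp] at hroot

/-- Multiple Khintchine inequality with constant `(A_r)^m`. -/
theorem multiple_khintchine (r : ℝ) (hr : 0 < r) (m : ℕ) (hm : 1 ≤ m) (N : ℕ)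
    (y : (Fin m → Fin N) → ℝ) :
    (∑ i : Fin m → Fin N, |y i| ^ (2 : ℝ)) ^ ((1 : ℝ) / 2)
      ≤ khintchineA r ^ m *
        (∫ t : Fin m → ℝ in Set.Icc 0 1,
          |∑ i : Fin m → Fin N, (∏ k, rademacher ((i k).1 + 1) (t k)) * y i| ^ r) ^ (1 / r) := by
  have hcube : (volume : Measure (Fin m → ℝ)).restrict (Set.Icc 0 1) =
      Measure.pi fun _ => volume.restrict (Set.Icc (0 : ℝ) 1) := by
    rw [← Measure.restrict_pi_pi, ← volume_pi]
    exact congrArg _ (Set.pi_univ_Icc 0 1).symm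
  have h := sum_sq_rpow_le_integral_abs_rademacher_chaos_rpow hr y
  rw [← hcube] at h
  simp only [rpow_two, sq_abs]
  exact sqrt_le_mul_rpow_of_rpow_le hr (Finset.sum_nonneg fun _ _ => sq_nonneg _)
    (pow_nonneg (khintchineA_nonneg r) m) (integral_nonneg fun _ => by positivity) h
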